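/- arXiv:cs/0502019 — 10 statements merged into one kernel-verified Lean document; each statement's English description precedes it below -/
import Mathlib

section
/- (Symmetric equilibrium of the opposite-weight game) Let 1/2 ≤ α < 1 and consider the two-user, two-machine game in which both users have budget 1, user 1 has weights (α, 1−α) and user 2 has weights (1−α, α). Then the bid profile x = (α, 1−α) for user 1 and y = (1−α, α) for user 2 is a Nash equilibrium; at this equilibrium the social welfare is U = 2 − 4α(1−α), the social optimum is U* = 2α, and the efficiency satisfies U/U* = 2α + 1/α − 2 ≥ 2√2 − 2, with equality exactly when α = √2/2. -/
open Finset

/-- User `i`'s utility at the bid profile `x` (division by zero is zero, matching the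
convention that a machine with no bids is allocated to nobody). -/
noncomputable def util (m n : ℕ) (w x : Fin m → Fin n → ℝ) (i : Fin m) : ℝ :=
  ∑ j, w i j * (x i j / ∑ k, x k j)

/-- A bid profile is feasible if all bids are nonnegative and each user spends exactly
his budget. -/
def Feasible (m n : ℕ) (X : Fin m → ℝ) (x : Fin m → Fin n → ℝ) : Prop :=
  (∀ i j, 0 ≤ x i j) ∧ ∀ i, ∑ j, x i j = X i

/-- Nash equilibrium: a feasible profile where no user can strictly increase his utility
by unilaterally replacing his own bid vector with another feasible one. -/
def IsNash (m n : ℕ) (X : Fin m → ℝ) (w x : Fin m → Fin n → ℝ) : Prop :=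
  Feasible m n X x ∧
    ∀ (i : Fin m) (xi : Fin n → ℝ), (∀ j, 0 ≤ xi j) → ∑ j, xi j = X i →
      util m n w (Function.update x i xi) i ≤ util m n w x i

/-!
With the other users' bids on a machine fixed at total `c`, the share `t / (t + c)` is concave in
the bid `t`, so a bid vector is a best response as soon as the marginal utilities agree on all
machines bid on and are no larger elsewhere. In the opposite-weight game every machine receives
total bid `1`, and every marginal utility is the product of a weight `α` and an opposing bid
`1 - α`, or vice versa. The efficiency bound is AM-GM in the form
`2 * α + 1 / α - 2 * √2 = (√2 * α - 1) ^ 2 / α`.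
-/

section BestResponse

variable {m n : ℕ} {w x : Fin m → Fin n → ℝ} {i : Fin m}

/-- The derivative of user `i`'s utility with respect to his own bid on machine `j`, the other
users' bids being fixed. It is meaningful only where the total bid on `j` is nonzero. -/
noncomputable def marginalUtility (w x : Fin m → Fin n → ℝ) (i : Fin m) (j : Fin n) : ℝ :=
  w i j * ((∑ k, x k j - x i j) / (∑ k, x k j) ^ 2)

lemma share_le_tangent {c s t : ℝ} (hc : 0 ≤ c) (ht : 0 ≤ t) (hs : 0 < s + c) :
    t / (t + c) ≤ s / (s + c) + c / (s + c) ^ 2 * (t - s) := by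
  rcases (add_nonneg ht hc).eq_or_lt with htc | htc
  · obtain rfl : c = 0 := by linarith
    have hs' : s ≠ 0 := by linarith
    simp [← htc, hs']
  · have gap : s / (s + c) + c / (s + c) ^ 2 * (t - s) - t / (t + c) =
        c * (t - s) ^ 2 / ((s + c) ^ 2 * (t + c)) := by
      field_simp
      ring
    have gap_nonneg : 0 ≤ c * (t - s) ^ 2 / ((s + c) ^ 2 * (t + c)) := by positivity
    linarith

lemma sum_update_bid (x : Fin m → Fin n → ℝ) (i : Fin m) (b : Fin n → ℝ) (j : Fin n) :
    ∑ k, Function.update x i b k j = b j + (∑ k, x k j - x i j) := by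
  rw [← add_sum_erase univ _ (mem_univ i), ← add_sum_erase univ (x · j) (mem_univ i),
    Function.update_self, add_sub_cancel_left]
  congr 1
  refine sum_congr rfl fun k hk => ?_
  rw [Function.update_of_ne (ne_of_mem_erase hk)]

lemma util_update_le_add_marginalUtility (hw : ∀ j, 0 ≤ w i j) (hx : ∀ k j, 0 ≤ x k j)
    (hpos : ∀ j, 0 < ∑ k, x k j) {b : Fin n → ℝ} (hb : ∀ j, 0 ≤ b j) :
    util m n w (Function.update x i b) i ≤
      util m n w x i + ∑ j, marginalUtility w x i j * (b j - x i j) := by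
  rw [util, util, ← sum_add_distrib]
  refine sum_le_sum fun j _ => ?_
  have others_nonneg : 0 ≤ ∑ k, x k j - x i j :=
    sub_nonneg.2 (single_le_sum (f := (x · j)) (fun k _ => hx k j) (mem_univ i))
  have tangent := share_le_tangent (s := x i j) others_nonneg (hb j) (by simpa using hpos j)
  rw [add_sub_cancel] at tangent
  rw [sum_update_bid, Function.update_self, marginalUtility, mul_assoc, ← mul_add]
  exact mul_le_mul_of_nonneg_left tangent (hw j)

theorem isNash_of_marginalUtility_le {X μ : Fin m → ℝ} (hw : ∀ i j, 0 ≤ w i j)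
    (hx : Feasible m n X x) (hpos : ∀ j, 0 < ∑ k, x k j)
    (hle : ∀ i j, marginalUtility w x i j ≤ μ i)
    (heq : ∀ i j, x i j ≠ 0 → marginalUtility w x i j = μ i) :
    IsNash m n X w x := by
  refine ⟨hx, fun i b hb hbX => ?_⟩
  have gain_le (j : Fin n) :
      marginalUtility w x i j * (b j - x i j) ≤ μ i * (b j - x i j) := by
    by_cases hij : x i j = 0
    · exact mul_le_mul_of_nonneg_right (hle i j) (by simpa [hij] using hb j)
    · rw [heq i j hij]
  calc util m n w (Function.update x i b) i
      ≤ util m n w x i + ∑ j, marginalUtility w x i j * (b j - x i j) :=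
        util_update_le_add_marginalUtility (hw i) hx.1 hpos hb
    _ ≤ util m n w x i + ∑ j, μ i * (b j - x i j) := by
        gcongr _ + ?_
        exact sum_le_sum fun j _ => gain_le j
    _ = util m n w x i := by
        rw [← mul_sum, sum_sub_distrib, hbX, hx.2 i, sub_self, mul_zero, add_zero]

end BestResponse

section OppositeWeight

/-- The matrix with rows `(α, 1 - α)` and `(1 - α, α)`. It serves both as the weights of the
opposite-weight game and as its symmetric bid profile. -/
def oppositeWeight (α : ℝ) : Fin 2 → Fin 2 → ℝ := ![![α, 1 - α], ![1 - α, α]]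

lemma oppositeWeight_nonneg {α : ℝ} (h0 : 0 ≤ α) (h1 : α ≤ 1) (i j : Fin 2) :
    0 ≤ oppositeWeight α i j := by
  fin_cases i <;> fin_cases j <;> simp [oppositeWeight, h0, h1]

lemma sum_oppositeWeight_row (α : ℝ) (i : Fin 2) : ∑ j, oppositeWeight α i j = 1 := by
  fin_cases i <;> simp [oppositeWeight]

lemma sum_oppositeWeight_col (α : ℝ) (j : Fin 2) : ∑ i, oppositeWeight α i j = 1 := by
  fin_cases j <;> simp [oppositeWeight]

lemma marginalUtility_oppositeWeight (α : ℝ) (i j : Fin 2) :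
    marginalUtility (oppositeWeight α) (oppositeWeight α) i j = α * (1 - α) := by
  rw [marginalUtility, sum_oppositeWeight_col, one_pow, div_one]
  fin_cases i <;> fin_cases j <;> simp [oppositeWeight, mul_comm]

lemma isNash_oppositeWeight {α : ℝ} (h0 : 0 ≤ α) (h1 : α ≤ 1) :
    IsNash 2 2 (fun _ => 1) (oppositeWeight α) (oppositeWeight α) :=
  isNash_of_marginalUtility_le (μ := fun _ => α * (1 - α)) (oppositeWeight_nonneg h0 h1)
    ⟨oppositeWeight_nonneg h0 h1, sum_oppositeWeight_row α⟩
    (fun j => by rw [sum_oppositeWeight_col]; exact one_pos)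
    (fun i j => (marginalUtility_oppositeWeight α i j).le)
    (fun i j _ => marginalUtility_oppositeWeight α i j)

lemma sum_util_oppositeWeight (α : ℝ) :
    ∑ i, util 2 2 (oppositeWeight α) (oppositeWeight α) i = 2 - 4 * α * (1 - α) := by
  simp only [util, sum_oppositeWeight_col, div_one]
  simp only [oppositeWeight, Fin.sum_univ_two, Matrix.cons_val_zero, Matrix.cons_val_one]
  ring

lemma sum_max_oppositeWeight {α : ℝ} (hα : 1 / 2 ≤ α) :
    ∑ j, max (oppositeWeight α 0 j) (oppositeWeight α 1 j) = 2 * α := by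
  have hle : 1 - α ≤ α := by linarith
  simp only [oppositeWeight, Fin.sum_univ_two, Matrix.cons_val_zero, Matrix.cons_val_one,
    max_eq_left hle, max_eq_right hle, two_mul]

end OppositeWeight

section EfficiencyBound

variable {c x : ℝ}

lemma mul_add_one_div_sub_two_mul_sqrt (hc : 0 ≤ c) (hx : x ≠ 0) :
    c * x + 1 / x - 2 * √c = (√c * x - 1) ^ 2 / x := by
  rw [sub_sq, mul_pow, Real.sq_sqrt hc]
  field_simp
  ring

lemma two_mul_sqrt_le_mul_add_one_div (hc : 0 ≤ c) (hx : 0 < x) :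
    2 * √c ≤ c * x + 1 / x := by
  rw [← sub_nonneg, mul_add_one_div_sub_two_mul_sqrt hc hx.ne']
  positivity

lemma mul_add_one_div_eq_two_mul_sqrt_iff (hc : 0 ≤ c) (hx : x ≠ 0) :
    c * x + 1 / x = 2 * √c ↔ √c * x = 1 := by
  rw [← sub_eq_zero, mul_add_one_div_sub_two_mul_sqrt hc hx, div_eq_zero_iff, or_iff_left hx,
    sq_eq_zero_iff, sub_eq_zero]

end EfficiencyBound

/-- Symmetric equilibrium of the opposite-weight game: for `1/2 ≤ α < 1`,
in the two-user two-machine game with budgets `1`, user 1's weights `(α, 1-α)` and user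
2's weights `(1-α, α)`, the profile `x = (α, 1-α)`, `y = (1-α, α)` is a Nash
equilibrium; the social welfare there is `U = 2 - 4α(1-α)`, the social optimum is
`U* = 2α`, the efficiency is `U/U* = 2α + 1/α - 2 ≥ 2√2 - 2`, with equality exactly
when `α = √2/2`. -/
theorem oppositeWeight_symmetric_equilibrium (α : ℝ) (hα0 : 1 / 2 ≤ α) (hα1 : α < 1) :
    let w : Fin 2 → Fin 2 → ℝ := ![![α, 1 - α], ![1 - α, α]]
    let xstar : Fin 2 → Fin 2 → ℝ := ![![α, 1 - α], ![1 - α, α]]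
    IsNash 2 2 (fun _ => 1) w xstar ∧
    (∑ i, util 2 2 w xstar i = 2 - 4 * α * (1 - α)) ∧
    (∑ j, max (w 0 j) (w 1 j) = 2 * α) ∧
    ((∑ i, util 2 2 w xstar i) / (∑ j, max (w 0 j) (w 1 j)) = 2 * α + 1 / α - 2) ∧
    (2 * Real.sqrt 2 - 2 ≤ 2 * α + 1 / α - 2) ∧
    (2 * α + 1 / α - 2 = 2 * Real.sqrt 2 - 2 ↔ α = Real.sqrt 2 / 2) := by
  intro w xstar
  have α_pos : 0 < α := by linarith
  have welfare : ∑ i, util 2 2 w xstar i = 2 - 4 * α * (1 - α) := sum_util_oppositeWeight α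
  have optimum : ∑ j, max (w 0 j) (w 1 j) = 2 * α := sum_max_oppositeWeight hα0
  refine ⟨isNash_oppositeWeight α_pos.le hα1.le, welfare, optimum, ?_, ?_, ?_⟩
  · rw [welfare, optimum]
    field_simp
    ring
  · exact sub_le_sub_right (two_mul_sqrt_le_mul_add_one_div zero_le_two α_pos) 2
  · rw [sub_left_inj, mul_add_one_div_eq_two_mul_sqrt_iff zero_le_two α_pos.ne',
      mul_comm, ← eq_div_iff (by positivity), ← Real.sqrt_div_self']
end

section
/- (Cubic equation for opposite-weight equilibria) Let 0 < α < 1 and 0 < x, y < 1, and suppose α·y/(x+y)^2 = (1−α)(1−y)/(2−x−y)^2 and (1−α)·x/(x+y)^2 = α(1−x)/(2−x−y)^2 (the first-order equilibrium conditions for the opposite-weight two-player two-machine game, where x and y are the two users' bids on machine 1). Then δ = (2−x−y)/(x+y) satisfies δ^3 − cδ^2 + cδ − 1 = 0, where c = 1/(2α(1−α)) − 1. -/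
/-!
Let `s` and `t` be the total bids on the two machines and `δ = t / s`. The first-order condition of
a user with weights `(a, b)` involves only `δ` and the opponent's bid `y`, and is linear in `y`: it
reads `y * (a * δ ^ 2 + b) = b`. Solving for both bids and substituting in the budget identity
`(x + y) * (1 + δ) = 2` leaves a quartic equation in `δ`. Its terms of degree zero cancel, and
dividing by `δ ≠ 0` gives a cubic, for arbitrary weights `(a, b)` and `(c, d)`. When
`(c, d) = (b, a)` it is antipalindromic, and its middle coefficients become
`∓((a + b) ^ 2 / (2 * a * b) - 1)` once it is made monic.
-/

section Elimination

variable {R : Type*} [CommRing R] {a b c d x y δ : R}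

theorem two_mul_mul_eq_of_bid_mul_eq (hy : y * (a * δ ^ 2 + b) = b) (hx : x * (c * δ ^ 2 + d) = d)
    (hbudget : (x + y) * (1 + δ) = 2) :
    2 * ((a * δ ^ 2 + b) * (c * δ ^ 2 + d)) =
      (1 + δ) * (b * (c * δ ^ 2 + d) + d * (a * δ ^ 2 + b)) :=
  calc
    2 * ((a * δ ^ 2 + b) * (c * δ ^ 2 + d))
        = (x + y) * (1 + δ) * ((a * δ ^ 2 + b) * (c * δ ^ 2 + d)) := by rw [hbudget]
    _ = (1 + δ) * (y * (a * δ ^ 2 + b) * (c * δ ^ 2 + d)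
          + x * (c * δ ^ 2 + d) * (a * δ ^ 2 + b)) := by ring
    _ = (1 + δ) * (b * (c * δ ^ 2 + d) + d * (a * δ ^ 2 + b)) := by rw [hy, hx]

theorem mul_cubic_eq_zero_of_bid_mul_eq (hy : y * (a * δ ^ 2 + b) = b)
    (hx : x * (c * δ ^ 2 + d) = d) (hbudget : (x + y) * (1 + δ) = 2) :
    δ * (2 * (a * c) * δ ^ 3 - (a * d + b * c) * δ ^ 2
      + (a * d + b * c) * δ - 2 * (b * d)) = 0 := by
  linear_combination two_mul_mul_eq_of_bid_mul_eq hy hx hbudget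

end Elimination

section FirstOrderConditions

variable {K : Type*} [Field K] {a b c d x y s t : K}

theorem bid_mul_eq_of_marginal_eq (ht : t ≠ 0)
    (h : a * y / s ^ 2 = b * (1 - y) / t ^ 2) : y * (a * (t / s) ^ 2 + b) = b := by
  have hratio : a * y * (t / s) ^ 2 = b * (1 - y) :=
    calc
      a * y * (t / s) ^ 2 = a * y / s ^ 2 * t ^ 2 := by ring
      _ = b * (1 - y) / t ^ 2 * t ^ 2 := by rw [h]
      _ = b * (1 - y) := div_mul_cancel₀ _ (pow_ne_zero 2 ht)
  linear_combination hratio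

theorem cubic_of_marginal_eq (hs : x + y ≠ 0) (ht : 2 - x - y ≠ 0)
    (h₁ : a * y / (x + y) ^ 2 = b * (1 - y) / (2 - x - y) ^ 2)
    (h₂ : c * x / (x + y) ^ 2 = d * (1 - x) / (2 - x - y) ^ 2) :
    2 * (a * c) * ((2 - x - y) / (x + y)) ^ 3
      - (a * d + b * c) * ((2 - x - y) / (x + y)) ^ 2
      + (a * d + b * c) * ((2 - x - y) / (x + y)) - 2 * (b * d) = 0 := by
  have hbudget : (x + y) * (1 + (2 - x - y) / (x + y)) = 2 := by
    rw [mul_add, mul_div_cancel₀ _ hs]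
    ring
  exact (mul_eq_zero.mp (mul_cubic_eq_zero_of_bid_mul_eq (bid_mul_eq_of_marginal_eq ht h₁)
    (bid_mul_eq_of_marginal_eq ht h₂) hbudget)).resolve_left (div_ne_zero ht hs)

theorem oppositeWeight_cubic_general [NeZero (2 : K)] (ha : a ≠ 0) (hb : b ≠ 0)
    (hs : x + y ≠ 0) (ht : 2 - x - y ≠ 0)
    (h₁ : a * y / (x + y) ^ 2 = b * (1 - y) / (2 - x - y) ^ 2)
    (h₂ : b * x / (x + y) ^ 2 = a * (1 - x) / (2 - x - y) ^ 2) :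
    ((2 - x - y) / (x + y)) ^ 3
      - ((a + b) ^ 2 / (2 * a * b) - 1) * ((2 - x - y) / (x + y)) ^ 2
      + ((a + b) ^ 2 / (2 * a * b) - 1) * ((2 - x - y) / (x + y)) - 1 = 0 := by
  have hlead : 2 * a * b ≠ 0 := mul_ne_zero (mul_ne_zero two_ne_zero ha) hb
  have hcoeff : 2 * a * b * ((a + b) ^ 2 / (2 * a * b) - 1) = a ^ 2 + b ^ 2 := by
    rw [mul_sub, mul_div_cancel₀ _ hlead]
    ring
  refine (mul_eq_zero.mp ?_).resolve_left hlead
  linear_combination cubic_of_marginal_eq hs ht h₁ h₂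
    + ((2 - x - y) / (x + y) - ((2 - x - y) / (x + y)) ^ 2) * hcoeff

end FirstOrderConditions

/-- Cubic equation for opposite-weight equilibria: if `0 < α < 1`,
`0 < x, y < 1`, and the first-order equilibrium conditions
`α·y/(x+y)² = (1-α)(1-y)/(2-x-y)²` and `(1-α)·x/(x+y)² = α(1-x)/(2-x-y)²` hold, then
`δ = (2-x-y)/(x+y)` satisfies `δ³ - cδ² + cδ - 1 = 0` where `c = 1/(2α(1-α)) - 1`. -/
theorem oppositeWeight_cubic (α x y : ℝ) (hα0 : 0 < α) (hα1 : α < 1)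
    (hx0 : 0 < x) (hx1 : x < 1) (hy0 : 0 < y) (hy1 : y < 1)
    (h1 : α * y / (x + y) ^ 2 = (1 - α) * (1 - y) / (2 - x - y) ^ 2)
    (h2 : (1 - α) * x / (x + y) ^ 2 = α * (1 - x) / (2 - x - y) ^ 2) :
    ((2 - x - y) / (x + y)) ^ 3
      - (1 / (2 * α * (1 - α)) - 1) * ((2 - x - y) / (x + y)) ^ 2
      + (1 / (2 * α * (1 - α)) - 1) * ((2 - x - y) / (x + y)) - 1 = 0 := by
  simpa only [add_sub_cancel, one_pow] using
    oppositeWeight_cubic_general hα0.ne' (sub_pos.mpr hα1).ne' (add_pos hx0 hy0).ne'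
      (show 2 - x - y ≠ 0 by linarith) h1 h2
end

section
/- (Asymmetric equilibria threshold) Let 0 < α < 1, let c = 1/(2α(1−α)) − 1, and let f(δ) = δ^3 − cδ^2 + cδ − 1. Then δ = 1 is always a root of f, and f has a positive real root different from 1 if and only if α > α₀ or α < 1 − α₀, where α₀ = (2+√2)/4; moreover in that case f has three distinct positive real roots. -/
/-! Away from `δ = 1`, the equation `f δ = 0` is `δ + δ⁻¹ = c - 1`. For positive `δ ≠ 1` the
left-hand side exceeds `2`, and by symmetry its solutions come in pairs `δ, δ⁻¹`; writing
`δ = exp t` turns it into `2 cosh t`, which takes every value above `2`. Hence nontrivial positive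
roots exist exactly when `c > 3`, and completing the square turns `c > 3` into `√2 < |4α - 2|`. -/

/-- The cubic `δ³ - cδ² + cδ - 1` whose positive roots are the interior Nash equilibria. -/
def equilibriumCubic {R : Type*} [CommRing R] (c δ : R) : R :=
  δ ^ 3 - c * δ ^ 2 + c * δ - 1

theorem equilibriumCubic_one {R : Type*} [CommRing R] (c : R) : equilibriumCubic c 1 = 0 := by
  unfold equilibriumCubic
  ring

theorem equilibriumCubic_eq_zero_iff {K : Type*} [Field K] {c δ : K} (hδ : δ ≠ 0) :
    equilibriumCubic c δ = 0 ↔ δ = 1 ∨ δ + δ⁻¹ = c - 1 := by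
  have factored : equilibriumCubic c δ = δ * (δ - 1) * (δ + δ⁻¹ - (c - 1)) := by
    unfold equilibriumCubic
    field_simp
    ring
  simp only [factored, mul_eq_zero, hδ, false_or, sub_eq_zero]

theorem two_lt_add_inv {K : Type*} [Field K] [LinearOrder K] [IsStrictOrderedRing K] {x : K}
    (hx : 0 < x) (hx1 : x ≠ 1) : 2 < x + x⁻¹ := by
  have sq_div : x + x⁻¹ - 2 = (x - 1) ^ 2 / x := by
    field_simp
    ring
  have : 0 < (x - 1) ^ 2 / x := div_pos (sq_pos_of_ne_zero (sub_ne_zero.mpr hx1)) hx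
  linarith

theorem exists_one_lt_add_inv_eq {b : ℝ} (hb : 2 < b) : ∃ x : ℝ, 1 < x ∧ x + x⁻¹ = b := by
  have hb' : 1 < b / 2 := by linarith
  refine ⟨Real.exp (Real.arcosh (b / 2)), Real.one_lt_exp_iff.mpr (Real.arcosh_pos hb'), ?_⟩
  have cosh_eq := Real.cosh_arcosh hb'.le
  rw [Real.cosh_eq, Real.exp_neg] at cosh_eq
  linarith

theorem three_lt_of_equilibriumCubic_eq_zero {K : Type*} [Field K] [LinearOrder K]
    [IsStrictOrderedRing K] {c δ : K} (hδ : 0 < δ) (hδ1 : δ ≠ 1) (h : equilibriumCubic c δ = 0) :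
    3 < c := by
  have sum_eq : δ + δ⁻¹ = c - 1 := ((equilibriumCubic_eq_zero_iff hδ.ne').mp h).resolve_left hδ1
  linarith [two_lt_add_inv hδ hδ1]

theorem exists_one_lt_equilibriumCubic_eq_zero {c : ℝ} (hc : 3 < c) :
    ∃ δ : ℝ, 1 < δ ∧ equilibriumCubic c δ = 0 ∧ equilibriumCubic c δ⁻¹ = 0 := by
  obtain ⟨δ, hδ1, sum_eq⟩ := exists_one_lt_add_inv_eq (b := c - 1) (by linarith)
  have hδ : δ ≠ 0 := by positivity
  refine ⟨δ, hδ1, (equilibriumCubic_eq_zero_iff hδ).mpr (.inr sum_eq),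
    (equilibriumCubic_eq_zero_iff (inv_ne_zero hδ)).mpr (.inr ?_)⟩
  rw [inv_inv, add_comm, sum_eq]

theorem three_lt_one_div_sub_one_iff {α : ℝ} (hα0 : 0 < α) (hα1 : α < 1) :
    3 < 1 / (2 * α * (1 - α)) - 1 ↔ (2 + √2) / 4 < α ∨ α < 1 - (2 + √2) / 4 := by
  have denom_pos : 0 < 2 * α * (1 - α) := mul_pos (by linarith) (by linarith)
  calc 3 < 1 / (2 * α * (1 - α)) - 1
      ↔ 4 * (2 * α * (1 - α)) < 1 := by
        rw [← lt_div_iff₀ denom_pos, lt_sub_iff_add_lt]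
        norm_num
    _ ↔ 2 < (4 * α - 2) ^ 2 := by constructor <;> intro h <;> linarith
    _ ↔ √2 < |4 * α - 2| := by
        rw [← Real.sqrt_sq_eq_abs, Real.sqrt_lt_sqrt_iff zero_le_two]
    _ ↔ (2 + √2) / 4 < α ∨ α < 1 - (2 + √2) / 4 := by
        rw [lt_abs]
        apply or_congr <;> constructor <;> intro h <;> linarith

/-- Asymmetric equilibria threshold: for `0 < α < 1`, with
`c = 1/(2α(1-α)) - 1` and `f(δ) = δ³ - cδ² + cδ - 1`, `δ = 1` is always a root of `f`;
`f` has a positive real root different from `1` iff `α > α₀` or `α < 1 - α₀`, where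
`α₀ = (2 + √2)/4`; and in that case `f` has three distinct positive real roots. -/
theorem asymmetric_equilibria_threshold (α : ℝ) (hα0 : 0 < α) (hα1 : α < 1) :
    let c : ℝ := 1 / (2 * α * (1 - α)) - 1
    let f : ℝ → ℝ := fun δ => δ ^ 3 - c * δ ^ 2 + c * δ - 1
    let α₀ : ℝ := (2 + Real.sqrt 2) / 4
    f 1 = 0 ∧
    ((∃ δ : ℝ, 0 < δ ∧ δ ≠ 1 ∧ f δ = 0) ↔ (α₀ < α ∨ α < 1 - α₀)) ∧
    ((α₀ < α ∨ α < 1 - α₀) →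
      ∃ δ₁ δ₂ δ₃ : ℝ, 0 < δ₁ ∧ 0 < δ₂ ∧ 0 < δ₃ ∧
        δ₁ ≠ δ₂ ∧ δ₁ ≠ δ₃ ∧ δ₂ ≠ δ₃ ∧ f δ₁ = 0 ∧ f δ₂ = 0 ∧ f δ₃ = 0) := by
  intro c f α₀
  have threshold : 3 < c ↔ α₀ < α ∨ α < 1 - α₀ := three_lt_one_div_sub_one_iff hα0 hα1
  rw [← threshold]
  refine ⟨equilibriumCubic_one c, ⟨?_, fun hc => ?_⟩, fun hc => ?_⟩
  · rintro ⟨δ, hδ, hδ1, root⟩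
    exact three_lt_of_equilibriumCubic_eq_zero hδ hδ1 root
  · obtain ⟨δ, hδ1, root, -⟩ := exists_one_lt_equilibriumCubic_eq_zero hc
    exact ⟨δ, one_pos.trans hδ1, hδ1.ne', root⟩
  · obtain ⟨δ, hδ1, root, root_inv⟩ := exists_one_lt_equilibriumCubic_eq_zero hc
    have hδ : 0 < δ := one_pos.trans hδ1
    have inv_lt_one : δ⁻¹ < 1 := inv_lt_one_of_one_lt₀ hδ1
    exact ⟨δ⁻¹, 1, δ, inv_pos.mpr hδ, one_pos, hδ, inv_lt_one.ne, (inv_lt_one.trans hδ1).ne,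
      hδ1.ne, root_inv, equilibriumCubic_one c, root⟩
end

section
/- (Theorem 2, efficiency) In any strongly competitive normalized two-player price-anticipating allocation game, every Nash equilibrium ω satisfies U(ω) ≥ (3/4)·U*, where U(ω) is the social welfare at ω and U* is the social optimum; moreover the constant 3/4 is tight in the worst case. -/
open Finset

open Filter Topology

/-!
An empty machine can be won by an arbitrarily small bid, so every bid is positive at an equilibrium
`(x, y)`. Stationarity then gives multipliers `l` and `m` with `a = l (x + y)² / y` and
`b = m (x + y)² / x`, and the welfare is `2 - 2 l - 2 m`, while `U* = 2 - ∑ min a b`.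
Let `m ≤ l` and let `D` be the total variation distance between `x` and `y`. Two applications of
Cauchy–Schwarz give `4 l (1 + D²) ≤ 1` and
`∑ min a b = l m ∑ (x + y)² / max (l x) (m y) ≥ 4 l m / (l + m D)`, and these imply the bound.

For tightness, every positive `(x, y)` is an equilibrium for the weights above. If the bids nearly
agree, and on the second machine `x` is of smaller order than `y ^ 2`, which is itself small, then
`l` is close to `1 / 4`, while `m` and `∑ min a b` are close to `0`.
-/

variable {ι : Type*} {a b x y : ι → ℝ} {j k : ι} {l m t : ℝ}

/-- The first-order conditions for `x` as a response to `y`: the marginal utility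
`a j * y j / (x j + y j) ^ 2` of a bid is the same number `l` on every machine. -/
def IsStationaryBid (l : ℝ) (a x y : ι → ℝ) : Prop :=
  ∀ j, a j * y j = l * (x j + y j) ^ 2

namespace IsStationaryBid

lemma weight_eq (h : IsStationaryBid l a x y) (hy : y j ≠ 0) :
    a j = l * ((x j + y j) ^ 2 / y j) := by
  rw [← mul_div_assoc, eq_div_iff hy, h j]

lemma mul_share_eq (h : IsStationaryBid l a x y) (hxy : x j + y j ≠ 0) :
    a j * (x j / (x j + y j)) = a j - l * (x j + y j) := by
  rw [← mul_div_assoc, div_eq_iff hxy]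
  linear_combination -h j

lemma min_weight_eq (ha : IsStationaryBid l a x y) (hb : IsStationaryBid m b y x) (hl : 0 < l)
    (hm : 0 < m) (hx : 0 < x j) (hy : 0 < y j) :
    min (a j) (b j) = l * m * ((x j + y j) ^ 2 / max (l * x j) (m * y j)) := by
  have eq_a : a j = l * m * (x j + y j) ^ 2 / (m * y j) := by
    rw [ha.weight_eq hy.ne']; field_simp
  have eq_b : b j = l * m * (x j + y j) ^ 2 / (l * x j) := by
    rw [hb.weight_eq hx.ne', add_comm (y j)]; field_simp
  rw [← mul_div_assoc, eq_a, eq_b]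
  obtain hle | hle := le_total (l * x j) (m * y j)
  · rw [max_eq_right hle, min_eq_left (by gcongr)]
  · rw [max_eq_left hle, min_eq_right (by gcongr)]

end IsStationaryBid

lemma hasDerivAt_mul_share (c q p : ℝ) (h : p + q ≠ 0) :
    HasDerivAt (fun z => c * (z / (z + q))) (c * q / (p + q) ^ 2) p := by
  refine (((hasDerivAt_id p).div ((hasDerivAt_id p).add_const q) h).const_mul c).congr_deriv ?_
  simp only [id]
  field_simp
  ring

lemma eight_thirds_mul_add_sub_le {d : ℝ} (hm : 0 < m) (hml : m ≤ l) (hd : 0 ≤ d)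
    (hl : 4 * l * (1 + d ^ 2) ≤ 1) : 8 / 3 * (l + m) - 2 / 3 ≤ 4 * l * m / (l + m * d) := by
  have l_pos : 0 < l := hm.trans_le hml
  have two_mul_le : 2 * m ^ 2 * d ≤ l * m + l ^ 2 * d ^ 2 :=
    calc 2 * m ^ 2 * d ≤ 2 * m * (l * d) := by rw [sq]; nlinarith [mul_nonneg hm.le hd]
      _ ≤ m ^ 2 + (l * d) ^ 2 := by linarith [two_mul_le_add_sq m (l * d)]
      _ ≤ l * m + l ^ 2 * d ^ 2 := by nlinarith
  calc 8 / 3 * (l + m) - 2 / 3 ≤ 8 / 3 * (m - l * d ^ 2) := by linarith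
    _ ≤ 4 * l * m / (l + m * d) := by
      rw [le_div_iff₀ (by positivity)]
      have : 0 ≤ l * m * d ^ 3 := by positivity
      nlinarith [sq_nonneg (l * d)]

variable [Fintype ι]

/-- The utility of a user with weights `a` who bids `x` while the other users together bid `y`. -/
noncomputable def payoff (a x y : ι → ℝ) : ℝ :=
  ∑ j, a j * (x j / (x j + y j))

/-- `x` is a best response of a user with weights `a` to the total bids `y` of the other users.
The budget is not a parameter: it is the amount `∑ j, x j` that `x` spends. -/
structure IsBestResponse (a x y : ι → ℝ) : Prop where
  nonneg : ∀ j, 0 ≤ x j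
  payoff_le : ∀ z : ι → ℝ, (∀ j, 0 ≤ z j) → ∑ j, z j = ∑ j, x j → payoff a z y ≤ payoff a x y

/-- The total variation distance between two bid vectors, normalized as half the `ℓ¹` distance. -/
noncomputable def tvDist (x y : ι → ℝ) : ℝ :=
  (∑ j, |x j - y j|) / 2

/-- The weights, normalized to sum to `1`, that make `x` stationary against `y`. -/
noncomputable def supportingWeight (x y : ι → ℝ) (j : ι) : ℝ :=
  (x j + y j) ^ 2 / y j / ∑ k, (x k + y k) ^ 2 / y k

section Nash

variable {N n : ℕ}

lemma util_update_eq_payoff (w x : Fin N → Fin n → ℝ) (i : Fin N) (z : Fin n → ℝ) :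
    util N n w (Function.update x i z) i = payoff (w i) z fun j => ∑ k ∈ {i}ᶜ, x k j := by
  have others (j : Fin n) : ∑ k ∈ {i}ᶜ, Function.update x i z k j = ∑ k ∈ {i}ᶜ, x k j :=
    sum_congr rfl fun k hk => by
      rw [Function.update_of_ne (by simpa only [mem_compl, mem_singleton] using hk)]
  simp only [util, payoff, Fintype.sum_eq_add_sum_compl i, Function.update_self, others]

lemma util_eq_payoff (w x : Fin N → Fin n → ℝ) (i : Fin N) :
    util N n w x i = payoff (w i) (x i) fun j => ∑ k ∈ {i}ᶜ, x k j := by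
  simpa only [Function.update_eq_self] using util_update_eq_payoff w x i (x i)

lemma isNash_iff_forall_isBestResponse {X : Fin N → ℝ} {w x : Fin N → Fin n → ℝ} :
    IsNash N n X w x ↔
      ∀ i, ∑ j, x i j = X i ∧ IsBestResponse (w i) (x i) fun j => ∑ k ∈ {i}ᶜ, x k j := by
  simp only [IsNash, Feasible, util_update_eq_payoff, util_eq_payoff w x]
  constructor
  · rintro ⟨⟨nonneg, budget⟩, best⟩ i
    exact ⟨budget i, nonneg i, fun z hz hzx => best i z hz (hzx.trans (budget i))⟩
  · intro h
    exact ⟨⟨fun i => (h i).2.nonneg, fun i => (h i).1⟩,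
      fun i z hz hzX => (h i).2.payoff_le z hz (hzX.trans (h i).1.symm)⟩

lemma isNash_two_iff {X : Fin 2 → ℝ} {w x : Fin 2 → Fin n → ℝ} :
    IsNash 2 n X w x ↔ (∑ j, x 0 j = X 0 ∧ IsBestResponse (w 0) (x 0) (x 1)) ∧
      ∑ j, x 1 j = X 1 ∧ IsBestResponse (w 1) (x 1) (x 0) := by
  rw [isNash_iff_forall_isBestResponse, Fin.forall_fin_two]
  simp only [show ({0}ᶜ : Finset (Fin 2)) = {1} from rfl,
    show ({1}ᶜ : Finset (Fin 2)) = {0} from rfl, sum_singleton]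

lemma sum_util_two (w x : Fin 2 → Fin n → ℝ) :
    ∑ i, util 2 n w x i = payoff (w 0) (x 0) (x 1) + payoff (w 1) (x 1) (x 0) := by
  simp only [Fin.sum_univ_two, util_eq_payoff, show ({0}ᶜ : Finset (Fin 2)) = {1} from rfl,
    show ({1}ᶜ : Finset (Fin 2)) = {0} from rfl, sum_singleton]

end Nash

namespace IsBestResponse

lemma exchange_le (h : IsBestResponse a x y) (hjk : j ≠ k) (ht : t ∈ Set.Icc (-x k) (x j)) :
    a j * ((x j - t) / (x j - t + y j)) + a k * ((x k + t) / (x k + t + y k)) ≤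
      a j * (x j / (x j + y j)) + a k * (x k / (x k + y k)) := by
  classical
  let z := Function.update (Function.update x j (x j - t)) k (x k + t)
  have zj : z j = x j - t := by simp only [z, Function.update_of_ne hjk, Function.update_self]
  have zk : z k = x k + t := Function.update_self ..
  have z_of_ne (i : ι) (hi : i ≠ j ∧ i ≠ k) : z i = x i := by
    simp only [z, Function.update_of_ne hi.2, Function.update_of_ne hi.1]
  have z_nonneg (i : ι) : 0 ≤ z i := by
    by_cases hij : i = j
    · rw [hij, zj]; linarith [ht.2]
    by_cases hik : i = k
    · rw [hik, zk]; linarith [ht.1]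
    · exact z_of_ne i ⟨hij, hik⟩ ▸ h.nonneg i
  have budget : ∑ i, (z i - x i) = 0 := by
    rw [Fintype.sum_eq_add j k hjk fun i hi => by rw [z_of_ne i hi, sub_self], zj, zk]
    ring
  have gain : payoff a z y - payoff a x y ≤ 0 :=
    sub_nonpos.2 (h.payoff_le z z_nonneg (by rwa [sum_sub_distrib, sub_eq_zero] at budget))
  rw [payoff, payoff, ← sum_sub_distrib,
    Fintype.sum_eq_add j k hjk fun i hi => by rw [z_of_ne i hi, sub_self], zj, zk] at gain
  linarith

-- Half of a bid on an uncontested machine already wins it, so the other half is wasted there.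
lemma eq_zero_of_opposing_eq_zero (h : IsBestResponse a x y) (hyj : y j = 0)
    (hak : 0 < a k) (hyk : 0 < y k) : x j = 0 := by
  by_contra hne
  have hxj : 0 < x j := (h.nonneg j).lt_of_ne' hne
  have hxk : 0 ≤ x k := h.nonneg k
  have hjk : j ≠ k := by rintro rfl; exact hyk.ne' hyj
  have hle := h.exchange_le hjk (t := x j / 2) ⟨by linarith, by linarith⟩
  have share_lt : x k / (x k + y k) < (x k + x j / 2) / (x k + x j / 2 + y k) := by
    rw [div_lt_div_iff₀ (by linarith) (by linarith)]
    nlinarith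
  rw [hyj, add_zero, add_zero, div_self hne, div_self (by linarith)] at hle
  linarith [mul_lt_mul_of_pos_left share_lt hak]

-- An arbitrarily small bid wins the whole of a machine without bids, at an arbitrarily small loss.
lemma eq_zero_of_unbid (h : IsBestResponse a x y) (hxj : x j = 0) (hyj : y j = 0)
    (haj : 0 < a j) (hyk : 0 < y k) : x k = 0 := by
  by_contra hne
  have hxk : 0 < x k := (h.nonneg k).lt_of_ne' hne
  have hkj : k ≠ j := by rintro rfl; exact hne hxj
  have exchange : ∀ᶠ t in 𝓝[>] (0 : ℝ),
      a k * ((x k - t) / (x k - t + y k)) + a j ≤ a k * (x k / (x k + y k)) := by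
    filter_upwards [Ioo_mem_nhdsGT hxk] with t ht
    have hle := h.exchange_le hkj (t := t) ⟨by linarith [ht.1], ht.2.le⟩
    simpa [hxj, hyj, div_self ht.1.ne'] using hle
  have limit : Tendsto (fun t => a k * ((x k - t) / (x k - t + y k)) + a j) (𝓝[>] 0)
      (𝓝 (a k * ((x k - 0) / (x k - 0 + y k)) + a j)) := by
    have cont : ContinuousAt (fun t => a k * ((x k - t) / (x k - t + y k)) + a j) 0 := by
      fun_prop (disch := linarith)
    exact cont.tendsto.mono_left nhdsWithin_le_nhds
  have hle := le_of_tendsto limit exchange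
  rw [sub_zero] at hle
  linarith

lemma opposing_pos (h : IsBestResponse a x y) (ha : ∀ j, 0 < a j) (hx : 0 < ∑ j, x j)
    (hy : ∀ j, 0 ≤ y j) (hy' : 0 < ∑ j, y j) (j : ι) : 0 < y j := by
  refine (hy j).lt_of_ne' fun hyj => ?_
  obtain ⟨i, -, hyi⟩ := exists_lt_of_sum_lt (by simpa using hy' : ∑ _j : ι, (0 : ℝ) < ∑ j, y j)
  obtain ⟨k, -, hxk⟩ := exists_lt_of_sum_lt (by simpa using hx : ∑ _j : ι, (0 : ℝ) < ∑ j, x j)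
  have hyk : 0 < y k :=
    (hy k).lt_of_ne' fun hyk => hxk.ne' (h.eq_zero_of_opposing_eq_zero hyk (ha i) hyi)
  have hxj : x j = 0 := h.eq_zero_of_opposing_eq_zero hyj (ha i) hyi
  exact hxk.ne' (h.eq_zero_of_unbid hxj hyj (ha j) hyk)

lemma marginal_eq (h : IsBestResponse a x y) (hx : ∀ j, 0 < x j) (hy : ∀ j, 0 < y j) (j k : ι) :
    a j * y j / (x j + y j) ^ 2 = a k * y k / (x k + y k) ^ 2 := by
  obtain rfl | hjk := eq_or_ne j k
  · rfl
  have hj : x j - 0 + y j ≠ 0 := by linarith [hx j, hy j]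
  have hk : x k + 0 + y k ≠ 0 := by linarith [hx k, hy k]
  have loss := (hasDerivAt_mul_share (a j) (y j) (x j - 0) hj).comp_const_sub (x j) 0
  have gain := (hasDerivAt_mul_share (a k) (y k) (x k + 0) hk).comp_const_add (x k) 0
  have max_zero : IsLocalMax (fun t => a j * ((x j - t) / (x j - t + y j)) +
      a k * ((x k + t) / (x k + t + y k))) 0 := by
    filter_upwards [Icc_mem_nhds (neg_lt_zero.2 (hx k)) (hx j)] with t ht
    simpa only [sub_zero, add_zero] using h.exchange_le hjk ht
  have stationary := max_zero.hasDerivAt_eq_zero (loss.add gain)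
  simp only [sub_zero, add_zero] at stationary
  linarith

lemma exists_isStationaryBid (h : IsBestResponse a x y) (hx : ∀ j, 0 < x j) (hy : ∀ j, 0 < y j) :
    ∃ l, IsStationaryBid l a x y := by
  obtain _ | ⟨⟨k⟩⟩ := isEmpty_or_nonempty ι
  · exact ⟨0, isEmptyElim⟩
  · refine ⟨a k * y k / (x k + y k) ^ 2, fun j => ?_⟩
    have hj : (x j + y j) ^ 2 ≠ 0 := (pow_pos (add_pos (hx j) (hy j)) 2).ne'
    rw [← h.marginal_eq hx hy j k, div_mul_cancel₀ _ hj]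

end IsBestResponse

lemma tvDist_nonneg (x y : ι → ℝ) : 0 ≤ tvDist x y :=
  div_nonneg (sum_nonneg fun _ _ => abs_nonneg _) zero_le_two

namespace IsStationaryBid

-- The payoff is concave in the bids, so stationary bids are optimal: the tangent at `x j` lies
-- above the graph, by `l * (z j - x j) ^ 2 / (z j + y j)`.
lemma isBestResponse (h : IsStationaryBid l a x y) (hl : 0 ≤ l) (hx : ∀ j, 0 ≤ x j)
    (hy : ∀ j, 0 < y j) : IsBestResponse a x y where
  nonneg := hx
  payoff_le z hz hzx := by
    have tangent (j : ι) :
        a j * (z j / (z j + y j)) ≤ a j * (x j / (x j + y j)) + l * (z j - x j) := by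
      have hxy : x j + y j ≠ 0 := (add_pos_of_nonneg_of_pos (hx j) (hy j)).ne'
      rw [h.mul_share_eq hxy, ← mul_div_assoc,
        div_le_iff₀ (add_pos_of_nonneg_of_pos (hz j) (hy j))]
      linarith [h j, mul_nonneg hl (sq_nonneg (z j - x j))]
    calc payoff a z y ≤ ∑ j, (a j * (x j / (x j + y j)) + l * (z j - x j)) :=
          sum_le_sum fun j _ => tangent j
      _ = payoff a x y := by
          rw [sum_add_distrib, ← mul_sum, sum_sub_distrib, hzx, sub_self, mul_zero, add_zero,
            payoff]

lemma payoff_eq (h : IsStationaryBid l a x y) (hxy : ∀ j, x j + y j ≠ 0) :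
    payoff a x y = ∑ j, a j - l * (∑ j, x j + ∑ j, y j) := by
  rw [payoff, ← sum_add_distrib, mul_sum, ← sum_sub_distrib]
  exact sum_congr rfl fun j _ => h.mul_share_eq (hxy j)

lemma sum_weight_eq (h : IsStationaryBid l a x y) (hy : ∀ j, y j ≠ 0) :
    ∑ j, a j = l * (4 * ∑ j, x j + ∑ j, (x j - y j) ^ 2 / y j) := by
  rw [mul_sum, ← sum_add_distrib, mul_sum]
  refine sum_congr rfl fun j _ => ?_
  have hyj := hy j
  rw [h.weight_eq hyj]
  field_simp
  ring

lemma multiplier_pos (h : IsStationaryBid l a x y) (hx : ∀ j, 0 ≤ x j) (hy : ∀ j, 0 < y j)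
    (ha : 0 < ∑ j, a j) : 0 < l := by
  rw [h.sum_weight_eq fun j => (hy j).ne'] at ha
  refine pos_of_mul_pos_left ha (add_nonneg (mul_nonneg zero_le_four ?_) ?_)
  · exact sum_nonneg fun j _ => hx j
  · exact sum_nonneg fun j _ => div_nonneg (sq_nonneg _) (hy j).le

lemma four_mul_add_tvDist_sq_le (h : IsStationaryBid l a x y) (hl : 0 ≤ l) (hy : ∀ j, 0 < y j) :
    4 * l * (∑ j, x j + tvDist x y ^ 2 / ∑ j, y j) ≤ ∑ j, a j := by
  have cauchy_schwarz : (∑ j, |x j - y j|) ^ 2 / ∑ j, y j ≤ ∑ j, (x j - y j) ^ 2 / y j := by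
    simpa only [sq_abs] using sq_sum_div_le_sum_sq_div univ (fun j => |x j - y j|) fun j _ => hy j
  calc 4 * l * (∑ j, x j + tvDist x y ^ 2 / ∑ j, y j)
      = l * (4 * ∑ j, x j + (∑ j, |x j - y j|) ^ 2 / ∑ j, y j) := by rw [tvDist]; ring
    _ ≤ l * (4 * ∑ j, x j + ∑ j, (x j - y j) ^ 2 / y j) := by gcongr
    _ = ∑ j, a j := (h.sum_weight_eq fun j => (hy j).ne').symm

end IsStationaryBid

lemma sum_max_mul_le (hm : 0 ≤ m) (hml : m ≤ l) (hx : ∀ j, 0 ≤ x j)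
    (hxy : ∑ j, x j = ∑ j, y j) :
    ∑ j, max (l * x j) (m * y j) ≤ l * ∑ j, x j + m * tvDist x y := by
  have le_add_posPart (j : ι) :
      max (l * x j) (m * y j) ≤ l * x j + m * ((|x j - y j| + (y j - x j)) / 2) := by
    have h_abs := mul_le_mul_of_nonneg_left (neg_le_abs (x j - y j)) hm
    have h_abs' := mul_le_mul_of_nonneg_left (le_abs_self (x j - y j)) hm
    have h_mul := mul_le_mul_of_nonneg_right hml (hx j)
    exact max_le (by linarith) (by linarith)
  calc ∑ j, max (l * x j) (m * y j)
      ≤ ∑ j, (l * x j + m * ((|x j - y j| + (y j - x j)) / 2)) :=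
        sum_le_sum fun j _ => le_add_posPart j
    _ = l * ∑ j, x j + m * tvDist x y := by
        rw [sum_add_distrib, ← mul_sum, ← mul_sum, ← sum_div, sum_add_distrib, sum_sub_distrib,
          hxy, sub_self, add_zero, tvDist]

namespace IsStationaryBid

lemma div_add_tvDist_le_sum_min (ha : IsStationaryBid l a x y) (hb : IsStationaryBid m b y x)
    (hm : 0 < m) (hml : m ≤ l) (hx : ∀ j, 0 < x j) (hy : ∀ j, 0 < y j) (sx : ∑ j, x j = 1)
    (sy : ∑ j, y j = 1) : 4 * l * m / (l + m * tvDist x y) ≤ ∑ j, min (a j) (b j) := by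
  have hl : 0 < l := hm.trans_le hml
  have max_pos (j : ι) : 0 < max (l * x j) (m * y j) := lt_max_of_lt_left (mul_pos hl (hx j))
  have sum_max_pos : 0 < ∑ j, max (l * x j) (m * y j) := by
    have : Nonempty ι := not_isEmpty_iff.1 fun _ => by simp at sx
    exact sum_pos (fun j _ => max_pos j) univ_nonempty
  calc 4 * l * m / (l + m * tvDist x y)
      = l * m * ((∑ j, (x j + y j)) ^ 2 / (l * ∑ j, x j + m * tvDist x y)) := by
        rw [sum_add_distrib, sx, sy]; ring
    _ ≤ l * m * ((∑ j, (x j + y j)) ^ 2 / ∑ j, max (l * x j) (m * y j)) := by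
        gcongr
        exact sum_max_mul_le hm.le hml (fun j => (hx j).le) (sx.trans sy.symm)
    _ ≤ l * m * ∑ j, (x j + y j) ^ 2 / max (l * x j) (m * y j) := by
        gcongr
        exact sq_sum_div_le_sum_sq_div univ _ fun j _ => max_pos j
    _ = ∑ j, min (a j) (b j) := by
        rw [mul_sum]
        exact sum_congr rfl fun j _ => (ha.min_weight_eq hb hl hm (hx j) (hy j)).symm

lemma three_quarters_mul_sum_max_le_of_le (ha : IsStationaryBid l a x y)
    (hb : IsStationaryBid m b y x) (hm : 0 < m) (hml : m ≤ l) (hx : ∀ j, 0 < x j)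
    (hy : ∀ j, 0 < y j) (sx : ∑ j, x j = 1) (sy : ∑ j, y j = 1) (sa : ∑ j, a j = 1)
    (sb : ∑ j, b j = 1) : 3 / 4 * ∑ j, max (a j) (b j) ≤ payoff a x y + payoff b y x := by
  have optimum : ∑ j, min (a j) (b j) + ∑ j, max (a j) (b j) = 2 := by
    rw [← sum_add_distrib]
    simp only [min_add_max, sum_add_distrib, sa, sb]
    norm_num
  have hl4 : 4 * l * (1 + tvDist x y ^ 2) ≤ 1 := by
    simpa only [sx, sy, sa, div_one] using ha.four_mul_add_tvDist_sq_le (hm.le.trans hml) hy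
  have bound := eight_thirds_mul_add_sub_le hm hml (tvDist_nonneg x y) hl4
  have overlap := ha.div_add_tvDist_le_sum_min hb hm hml hx hy sx sy
  rw [ha.payoff_eq fun j => (add_pos (hx j) (hy j)).ne',
    hb.payoff_eq fun j => (add_pos (hy j) (hx j)).ne', sx, sy, sa, sb]
  linarith

lemma three_quarters_mul_sum_max_le (ha : IsStationaryBid l a x y) (hb : IsStationaryBid m b y x)
    (hx : ∀ j, 0 < x j) (hy : ∀ j, 0 < y j) (sx : ∑ j, x j = 1) (sy : ∑ j, y j = 1)
    (sa : ∑ j, a j = 1) (sb : ∑ j, b j = 1) :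
    3 / 4 * ∑ j, max (a j) (b j) ≤ payoff a x y + payoff b y x := by
  have hl : 0 < l := ha.multiplier_pos (fun j => (hx j).le) hy (sa ▸ one_pos)
  have hm : 0 < m := hb.multiplier_pos (fun j => (hy j).le) hx (sb ▸ one_pos)
  obtain hml | hlm := le_total m l
  · exact ha.three_quarters_mul_sum_max_le_of_le hb hm hml hx hy sx sy sa sb
  · simpa only [max_comm, add_comm] using
      hb.three_quarters_mul_sum_max_le_of_le ha hl hlm hy hx sy sx sb sa

end IsStationaryBid

lemma isStationaryBid_supportingWeight (hy : ∀ j, y j ≠ 0) :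
    IsStationaryBid (∑ j, (x j + y j) ^ 2 / y j)⁻¹ (supportingWeight x y) x y := fun j => by
  rw [supportingWeight, div_mul_eq_mul_div, div_mul_cancel₀ _ (hy j), div_eq_inv_mul]

section Supporting

variable [Nonempty ι]

lemma sum_sq_div_pos (hx : ∀ j, 0 < x j) (hy : ∀ j, 0 < y j) :
    0 < ∑ j, (x j + y j) ^ 2 / y j :=
  sum_pos (fun j _ => div_pos (pow_pos (add_pos (hx j) (hy j)) 2) (hy j)) univ_nonempty

lemma supportingWeight_pos (hx : ∀ j, 0 < x j) (hy : ∀ j, 0 < y j) (j : ι) :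
    0 < supportingWeight x y j :=
  div_pos (div_pos (pow_pos (add_pos (hx j) (hy j)) 2) (hy j)) (sum_sq_div_pos hx hy)

lemma sum_supportingWeight (hx : ∀ j, 0 < x j) (hy : ∀ j, 0 < y j) :
    ∑ j, supportingWeight x y j = 1 := by
  simp only [supportingWeight, ← sum_div]
  exact div_self (sum_sq_div_pos hx hy).ne'

lemma isBestResponse_supportingWeight (hx : ∀ j, 0 < x j) (hy : ∀ j, 0 < y j) :
    IsBestResponse (supportingWeight x y) x y :=
  (isStationaryBid_supportingWeight fun j => (hy j).ne').isBestResponse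
    (inv_pos.2 (sum_sq_div_pos hx hy)).le (fun j => (hx j).le) hy

lemma payoff_supportingWeight (hx : ∀ j, 0 < x j) (hy : ∀ j, 0 < y j) :
    payoff (supportingWeight x y) x y =
      1 - (∑ j, x j + ∑ j, y j) / ∑ j, (x j + y j) ^ 2 / y j := by
  have stationary : IsStationaryBid _ (supportingWeight x y) x y :=
    isStationaryBid_supportingWeight fun j => (hy j).ne'
  rw [stationary.payoff_eq fun j => (add_pos (hx j) (hy j)).ne', sum_supportingWeight hx hy,
    inv_mul_eq_div]

end Supporting

/-- The bid vector on two machines that spends `p` of a unit budget on the second machine. The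
equilibria that show tightness are `splitBid (d ^ 3)` against `splitBid d` for small `d`. -/
def splitBid (p : ℝ) : Fin 2 → ℝ :=
  ![1 - p, p]

lemma splitBid_pos {p : ℝ} (hp : p ∈ Set.Ioo 0 1) : ∀ j, 0 < splitBid p j :=
  Fin.forall_fin_two.2 ⟨sub_pos.2 hp.2, hp.1⟩

lemma sum_splitBid (p : ℝ) : ∑ j, splitBid p j = 1 := by
  simp [splitBid]

lemma tendsto_sum_sq_div_splitBid :
    Tendsto (fun d => ∑ j, (splitBid (d ^ 3) j + splitBid d j) ^ 2 / splitBid d j)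
      (𝓝[>] 0) (𝓝 4) := by
  have cont : ContinuousAt
      (fun d : ℝ => (1 - d ^ 3 + (1 - d)) ^ 2 / (1 - d) + d * (d ^ 2 + 1) ^ 2) 0 := by
    fun_prop (disch := norm_num)
  have limit := cont.tendsto.mono_left (nhdsWithin_le_nhds (s := Set.Ioi 0))
  norm_num at limit
  refine limit.congr' ?_
  filter_upwards [self_mem_nhdsWithin] with d hd
  have cancel : (d ^ 3 + d) ^ 2 / d = d * (d ^ 2 + 1) ^ 2 := by
    rw [div_eq_iff (ne_of_gt hd)]
    ring
  simp only [splitBid, Fin.sum_univ_two, Matrix.cons_val_zero, Matrix.cons_val_one, cancel]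

lemma tendsto_supportingWeight_splitBid_zero :
    Tendsto (fun d => supportingWeight (splitBid (d ^ 3)) (splitBid d) 0) (𝓝[>] 0) (𝓝 1) := by
  have cont : ContinuousAt (fun d : ℝ => (1 - d ^ 3 + (1 - d)) ^ 2 / (1 - d)) 0 := by
    fun_prop (disch := norm_num)
  have limit := (cont.tendsto.mono_left (nhdsWithin_le_nhds (s := Set.Ioi 0))).div
    tendsto_sum_sq_div_splitBid four_ne_zero
  norm_num only at limit
  refine limit.congr fun d => ?_
  simp [supportingWeight, splitBid]

lemma tendsto_supportingWeight_splitBid_one :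
    Tendsto (fun d => supportingWeight (splitBid d) (splitBid (d ^ 3)) 1) (𝓝[>] 0) (𝓝 1) := by
  have cont : ContinuousAt (fun d : ℝ => (1 + d ^ 2) ^ 2 /
      (d * (1 - d + (1 - d ^ 3)) ^ 2 / (1 - d ^ 3) + (1 + d ^ 2) ^ 2)) 0 := by
    fun_prop (disch := norm_num)
  have limit := cont.tendsto.mono_left (nhdsWithin_le_nhds (s := Set.Ioi 0))
  norm_num at limit
  refine limit.congr' ?_
  filter_upwards [self_mem_nhdsWithin] with d hd
  have hd' : d ≠ 0 := ne_of_gt hd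
  have cancel : (d + d ^ 3) ^ 2 / d ^ 3 = (1 + d ^ 2) ^ 2 / d := by
    rw [div_eq_div_iff (pow_ne_zero 3 hd') hd']
    ring
  simp only [supportingWeight, splitBid, Fin.sum_univ_two, Matrix.cons_val_zero,
    Matrix.cons_val_one, cancel]
  rw [div_div, mul_add, mul_div_cancel₀ _ hd', mul_div_assoc]

lemma exists_supportingWeight_welfare_lt {ε : ℝ} (hε : 0 < ε) :
    ∃ x y : Fin 2 → ℝ, (∀ j, 0 < x j) ∧ (∀ j, 0 < y j) ∧ ∑ j, x j = 1 ∧ ∑ j, y j = 1 ∧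
      payoff (supportingWeight x y) x y + payoff (supportingWeight y x) y x <
        (3 / 4 + ε) * ∑ j, max (supportingWeight x y j) (supportingWeight y x j) := by
  have welfare_limit :=
    (tendsto_const_nhds (x := (2 : ℝ)) |>.div tendsto_sum_sq_div_splitBid four_ne_zero).const_sub 2
  have optimum_limit := (tendsto_supportingWeight_splitBid_zero.add
    tendsto_supportingWeight_splitBid_one).const_mul (3 / 4 + ε)
  have separated := welfare_limit.eventually_lt optimum_limit (by linarith)
  obtain ⟨d, hlt, hd⟩ := (separated.and (Ioo_mem_nhdsGT one_pos)).exists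
  have hd3 : d ^ 3 ∈ Set.Ioo 0 1 := ⟨pow_pos hd.1 3, pow_lt_one₀ hd.1.le hd.2 three_ne_zero⟩
  have hx := splitBid_pos hd3
  have hy := splitBid_pos hd
  refine ⟨splitBid (d ^ 3), splitBid d, hx, hy, sum_splitBid _, sum_splitBid _, ?_⟩
  have cost_pos := div_pos zero_lt_two (sum_sq_div_pos hy hx)
  have optimum_ge := add_le_add
    (le_max_left (supportingWeight (splitBid (d ^ 3)) (splitBid d) 0)
      (supportingWeight (splitBid d) (splitBid (d ^ 3)) 0))
    (le_max_right (supportingWeight (splitBid (d ^ 3)) (splitBid d) 1)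
      (supportingWeight (splitBid d) (splitBid (d ^ 3)) 1))
  rw [payoff_supportingWeight hx hy, payoff_supportingWeight hy hx, sum_splitBid, sum_splitBid,
    one_add_one_eq_two, Fin.sum_univ_two (f := fun j => max _ _)]
  calc _ < 2 - 2 / ∑ j, (splitBid (d ^ 3) j + splitBid d j) ^ 2 / splitBid d j := by linarith
    _ < _ := hlt
    _ ≤ _ := by gcongr

theorem IsNash.three_quarters_mul_sum_max_le {n : ℕ} {w x : Fin 2 → Fin n → ℝ}
    (h : IsNash 2 n (fun _ => 1) w x) (hw : ∀ i j, 0 < w i j) (hsum : ∀ i, ∑ j, w i j = 1) :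
    3 / 4 * (∑ j, max (w 0 j) (w 1 j)) ≤ ∑ i, util 2 n w x i := by
  obtain ⟨⟨s0, best0⟩, s1, best1⟩ := isNash_two_iff.1 h
  have p1 : ∀ j, 0 < x 1 j :=
    best0.opposing_pos (hw 0) (s0 ▸ one_pos) best1.nonneg (s1 ▸ one_pos)
  have p0 : ∀ j, 0 < x 0 j :=
    best1.opposing_pos (hw 1) (s1 ▸ one_pos) best0.nonneg (s0 ▸ one_pos)
  obtain ⟨l, stat0⟩ := best0.exists_isStationaryBid p0 p1
  obtain ⟨m, stat1⟩ := best1.exists_isStationaryBid p1 p0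
  rw [sum_util_two]
  exact stat0.three_quarters_mul_sum_max_le stat1 p0 p1 s0 s1 (hsum 0) (hsum 1)

lemma weight_pos_of_competitive {n : ℕ} {w : Fin 2 → Fin n → ℝ}
    (h : ∀ j, ∃ i k : Fin 2, i ≠ k ∧ 0 < w i j ∧ 0 < w k j) (i : Fin 2) (j : Fin n) :
    0 < w i j := by
  obtain ⟨p, q, hpq, hp, hq⟩ := h j
  obtain rfl | rfl : i = p ∨ i = q := by omega
  · exact hp
  · exact hq

/-- Theorem 2, efficiency: in any strongly competitive normalized
two-player price-anticipating allocation game (budgets `1`, weights summing to `1`),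
every Nash equilibrium has social welfare at least `3/4` of the social optimum
`U* = ∑ j, max_i w i j`; moreover the constant `3/4` is tight in the worst case. -/
theorem twoPlayer_efficiency :
    (∀ (n : ℕ) (w : Fin 2 → Fin n → ℝ),
      (∀ i j, 0 ≤ w i j) → (∀ i, ∑ j, w i j = 1) →
      (∀ j, ∃ i k : Fin 2, i ≠ k ∧ 0 < w i j ∧ 0 < w k j) →
      ∀ x : Fin 2 → Fin n → ℝ, IsNash 2 n (fun _ => 1) w x →
        3 / 4 * (∑ j, max (w 0 j) (w 1 j)) ≤ ∑ i, util 2 n w x i) ∧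
    (∀ ε : ℝ, 0 < ε →
      ∃ (n : ℕ) (w : Fin 2 → Fin n → ℝ),
        (∀ i j, 0 ≤ w i j) ∧ (∀ i, ∑ j, w i j = 1) ∧
        (∀ j, ∃ i k : Fin 2, i ≠ k ∧ 0 < w i j ∧ 0 < w k j) ∧
        ∃ x : Fin 2 → Fin n → ℝ, IsNash 2 n (fun _ => 1) w x ∧
          ∑ i, util 2 n w x i < (3 / 4 + ε) * (∑ j, max (w 0 j) (w 1 j))) := by
  refine ⟨fun n w _ hsum hcomp x hx =>
    hx.three_quarters_mul_sum_max_le (weight_pos_of_competitive hcomp) hsum, fun ε hε => ?_⟩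
  obtain ⟨x, y, hx, hy, sx, sy, hlt⟩ := exists_supportingWeight_welfare_lt hε
  have ha := supportingWeight_pos hx hy
  have hb := supportingWeight_pos hy hx
  refine ⟨2, ![supportingWeight x y, supportingWeight y x], ?_, ?_, fun j => ?_, ![x, y], ?_, ?_⟩
  · exact Fin.forall_fin_two.2 ⟨fun j => (ha j).le, fun j => (hb j).le⟩
  · exact Fin.forall_fin_two.2 ⟨sum_supportingWeight hx hy, sum_supportingWeight hy hx⟩
  · exact ⟨0, 1, zero_ne_one, ha j, hb j⟩
  · exact isNash_two_iff.2 ⟨⟨sx, isBestResponse_supportingWeight hx hy⟩,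
      sy, isBestResponse_supportingWeight hy hx⟩
  · rw [sum_util_two]
    exact hlt
end

section
/- (Theorem 2, envy-freeness) In any strongly competitive normalized two-player price-anticipating allocation game, every Nash equilibrium allocation is envy-free: if r_1 = (r_{11},…,r_{1n}) and r_2 = (r_{21},…,r_{2n}) are the two users' received fractions at the equilibrium, then U_1(r_1) ≥ U_1(r_2) and U_2(r_2) ≥ U_2(r_1), where U_i(r) = Σ_j w_{ij} r_j. -/
open Finset

/-!
A user bidding `a` against an opponent bidding `b` may instead bid the average `(a + b) / 2`, or
more if his budget is the larger one. On each machine this secures at least `3/4` of his current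
share plus `1/4` of the opponent's, an inequality that amounts to `0 ≤ (a - b) ^ 2`. At equilibrium
the deviation does not pay, so `3/4` of the value of his own allocation plus `1/4` of the value of
the opponent's is at most the value of his own.
-/

theorem exists_ge_sum_eq_of_sum_le {ι M : Type*} [Fintype ι] [AddCommGroup M] [PartialOrder M]
    [IsOrderedAddMonoid M] {f g : ι → M} (h : ∑ j, f j ≤ ∑ j, g j) :
    ∃ y : ι → M, (∀ j, f j ≤ y j) ∧ ∑ j, y j = ∑ j, g j := by
  classical
  rcases isEmpty_or_nonempty ι with _ | ⟨⟨i⟩⟩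
  · exact ⟨g, isEmptyElim, rfl⟩
  · have surplus_nonneg : 0 ≤ Pi.single (M := fun _ => M) i (∑ j, g j - ∑ j, f j) :=
      Pi.single_nonneg.2 (sub_nonneg.2 h)
    refine ⟨f + Pi.single i (∑ j, g j - ∑ j, f j),
      fun j => le_add_of_nonneg_right (surplus_nonneg j), ?_⟩
    simp [sum_add_distrib]

section Share

variable {𝕜 : Type*} [Field 𝕜] [LinearOrder 𝕜] [IsStrictOrderedRing 𝕜]

theorem three_quarters_share_add_quarter_share_le {a b y : 𝕜} (ha : 0 ≤ a) (hb : 0 ≤ b)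
    (hy : (a + b) / 2 ≤ y) :
    3 / 4 * (a / (a + b)) + 1 / 4 * (b / (a + b)) ≤ y / (y + b) := by
  have hy₀ : 0 ≤ y := (div_nonneg (add_nonneg ha hb) zero_le_two).trans hy
  rcases (add_nonneg ha hb).eq_or_lt with hab | hab
  · simpa [← hab] using div_nonneg hy₀ (add_nonneg hy₀ hb)
  · have hyb : 0 < y + b := add_pos_of_pos_of_nonneg ((half_pos hab).trans_le hy) hb
    have cross_mul : (3 * a + b) * (y + b) ≤ y * (4 * (a + b)) := by
      have : (a + b) / 2 * (a + 3 * b) ≤ y * (a + 3 * b) := by gcongr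
      linarith [sq_nonneg (a - b)]
    calc 3 / 4 * (a / (a + b)) + 1 / 4 * (b / (a + b))
        = (3 * a + b) / (4 * (a + b)) := by field_simp
      _ ≤ y / (y + b) := (div_le_div_iff₀ (by positivity) hyb).2 cross_mul

theorem sum_mul_share_le_of_midpoint_le {ι : Type*} {s : Finset ι} {w a b y : ι → 𝕜}
    (hw : ∀ j ∈ s, 0 ≤ w j) (ha : ∀ j ∈ s, 0 ≤ a j) (hb : ∀ j ∈ s, 0 ≤ b j)
    (hy : ∀ j ∈ s, (a j + b j) / 2 ≤ y j)
    (h : ∑ j ∈ s, w j * (y j / (y j + b j)) ≤ ∑ j ∈ s, w j * (a j / (a j + b j))) :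
    ∑ j ∈ s, w j * (b j / (a j + b j)) ≤ ∑ j ∈ s, w j * (a j / (a j + b j)) := by
  have mixture_le : 3 / 4 * ∑ j ∈ s, w j * (a j / (a j + b j)) +
      1 / 4 * ∑ j ∈ s, w j * (b j / (a j + b j)) ≤ ∑ j ∈ s, w j * (a j / (a j + b j)) :=
    calc 3 / 4 * ∑ j ∈ s, w j * (a j / (a j + b j)) + 1 / 4 * ∑ j ∈ s, w j * (b j / (a j + b j))
        = ∑ j ∈ s, w j * (3 / 4 * (a j / (a j + b j)) + 1 / 4 * (b j / (a j + b j))) := by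
          simp only [mul_sum, ← sum_add_distrib, mul_add, mul_left_comm]
      _ ≤ ∑ j ∈ s, w j * (y j / (y j + b j)) := sum_le_sum fun j hj =>
          mul_le_mul_of_nonneg_left
            (three_quarters_share_add_quarter_share_le (ha j hj) (hb j hj) (hy j hj)) (hw j hj)
      _ ≤ ∑ j ∈ s, w j * (a j / (a j + b j)) := h
  linarith

end Share

section TwoPlayer

variable {n : ℕ} {i k : Fin 2}

theorem sum_fin_two_eq_add_of_ne {M : Type*} [AddCommMonoid M] (hik : i ≠ k) (f : Fin 2 → M) :
    ∑ l, f l = f i + f k :=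
  Fintype.sum_eq_add i k hik fun l hl => by omega

theorem util_two_eq_sum (w x : Fin 2 → Fin n → ℝ) (hik : i ≠ k) :
    util 2 n w x i = ∑ j, w i j * (x i j / (x i j + x k j)) := by
  simp only [util, sum_fin_two_eq_add_of_ne hik]

theorem util_two_update_eq_sum (w x : Fin 2 → Fin n → ℝ) (hik : i ≠ k) (y : Fin n → ℝ) :
    util 2 n w (Function.update x i y) i = ∑ j, w i j * (y j / (y j + x k j)) := by
  simp only [util_two_eq_sum w _ hik, Function.update_self, Function.update_of_ne hik.symm]

end TwoPlayer

theorem twoPlayer_envy_free_general {n : ℕ} {X : Fin 2 → ℝ} {w x : Fin 2 → Fin n → ℝ}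
    (hx : IsNash 2 n X w x) {i k : Fin 2} (hw : ∀ j, 0 ≤ w i j) (hX : X k ≤ X i) :
    ∑ j, w i j * (x k j / ∑ l, x l j) ≤ ∑ j, w i j * (x i j / ∑ l, x l j) := by
  rcases eq_or_ne i k with rfl | hik
  · rfl
  obtain ⟨⟨bid_nonneg, sum_bid⟩, no_profitable_deviation⟩ := hx
  have sum_midpoint_le : ∑ j, (x i j + x k j) / 2 ≤ ∑ j, x i j := by
    rw [← sum_div, sum_add_distrib, sum_bid, sum_bid]
    linarith
  obtain ⟨y, midpoint_le, sum_y⟩ := exists_ge_sum_eq_of_sum_le sum_midpoint_le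
  have y_nonneg (j : Fin n) : 0 ≤ y j :=
    (div_nonneg (add_nonneg (bid_nonneg i j) (bid_nonneg k j)) zero_le_two).trans (midpoint_le j)
  have deviation_le := no_profitable_deviation i y y_nonneg (sum_y.trans (sum_bid i))
  rw [util_two_update_eq_sum w x hik, util_two_eq_sum w x hik] at deviation_le
  simp only [sum_fin_two_eq_add_of_ne hik]
  exact sum_mul_share_le_of_midpoint_le (fun j _ => hw j) (fun j _ => bid_nonneg i j)
    (fun j _ => bid_nonneg k j) (fun j _ => midpoint_le j) deviation_le

/-- Theorem 2, envy-freeness: in any strongly competitive normalized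
two-player price-anticipating allocation game, every Nash equilibrium allocation is
envy-free: each user values his own received fraction vector `r i j = x i j / Y j`
at least as much as the other user's. -/
theorem twoPlayer_envy_free (n : ℕ) (w : Fin 2 → Fin n → ℝ)
    (hw : ∀ i j, 0 ≤ w i j) (hws : ∀ i, ∑ j, w i j = 1)
    (hsc : ∀ j, ∃ i k : Fin 2, i ≠ k ∧ 0 < w i j ∧ 0 < w k j)
    (x : Fin 2 → Fin n → ℝ) (hx : IsNash 2 n (fun _ => 1) w x) :
    let r : Fin 2 → Fin n → ℝ := fun i j => x i j / ∑ k, x k j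
    (∑ j, w 0 j * r 1 j ≤ ∑ j, w 0 j * r 0 j) ∧
    (∑ j, w 1 j * r 0 j ≤ ∑ j, w 1 j * r 1 j) := by
  exact ⟨twoPlayer_envy_free_general hx (hw 0) le_rfl,
    twoPlayer_envy_free_general hx (hw 1) le_rfl⟩
end

section
/- (Theorem 3, envy-freeness) In any strongly competitive normalized m-player price-anticipating allocation game, every Nash equilibrium allocation (r_{ij}) satisfies U_i(r_i) ≥ (2√2 − 2)·U_i(r_k) for all users i and k, where r_i = (r_{i1},…,r_{in}) is user i's received fraction vector and U_i(r) = Σ_j w_{ij} r_j; that is, the envy-freeness of the game is at least 2√2 − 2, and this bound is tight in the worst case. -/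
/-!
At a Nash equilibrium user `i` gains nothing to first order by moving his bids towards those of
user `k`. On a machine where he bids `a` against rival bids `z`, of which `t ≤ z` is the bid of `k`,
the marginal gain `z (t - a) / (z + a) ^ 2` of this move is at least
`((2√2 - 2) t - a) / (z + a)`, because
`z (t - a) - ((2√2 - 2) t - a) (z + a) = (a - (√2 - 1) t) ^ 2 + (√2 - 1) ^ 2 t (z - t) ≥ 0`.
Summing over the machines gives the bound.

Both summands vanish when `i` and `k` are alone on a machine and `a = (√2 - 1) t`. To approach
equality, let `i` and `k` meet in this way on one machine, while `i` spends the rest of his budget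
on a second machine so crowded that his share `a / (z + a)` there hardly exceeds the
`a z / (z + a) ^ 2` of the first-order estimate.
-/

open Finset

/-- User `i`'s valuation of user `k`'s received fraction vector at the bid profile `x`:
`U_i(r_k) = ∑ j, w i j * (x k j / Y j)`. -/
noncomputable def valOf (m n : ℕ) (w x : Fin m → Fin n → ℝ) (i k : Fin m) : ℝ :=
  ∑ j, w i j * (x k j / ∑ l, x l j)

section Share

/-- The fraction of a machine obtained by bidding `b` against rival bids of total `z`. -/
noncomputable def share (z b : ℝ) : ℝ :=
  b / (z + b)

/-- The derivative of `share z` at the bid `b`. -/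
noncomputable def marginalShare (z b : ℝ) : ℝ :=
  z / (z + b) ^ 2

variable {z a b t : ℝ}

theorem hasDerivAt_share (h : z + a ≠ 0) : HasDerivAt (share z) (marginalShare z a) a := by
  have hden : HasDerivAt (fun b => z + b) 1 a := (hasDerivAt_id a).const_add z
  refine ((hasDerivAt_id a).div hden h).congr_deriv ?_
  simp [marginalShare]

/-- The side condition skips the jump of `share 0` at `0`. -/
theorem hasDerivAt_share_add_mul {d : ℝ} (h : z + a = 0 → d = 0) :
    HasDerivAt (fun e => share z (a + e * d)) (marginalShare z a * d) 0 := by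
  by_cases hd : d = 0
  · simpa [hd] using hasDerivAt_const (0 : ℝ) (share z a)
  · have hline : HasDerivAt (fun e => a + e * d) d 0 := by
      simpa using ((hasDerivAt_id (0 : ℝ)).mul_const d).const_add a
    exact HasDerivAt.comp_of_eq 0 (hasDerivAt_share (mt h hd)) hline (by simp)

theorem share_le_tangent_s13 (hz : 0 < z) (ha : 0 ≤ a) (hb : 0 ≤ b) :
    share z b ≤ share z a + marginalShare z a * (b - a) := by
  have hgap : share z a + marginalShare z a * (b - a) - share z b
      = z * (b - a) ^ 2 / ((z + a) ^ 2 * (z + b)) := by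
    unfold share marginalShare
    field_simp
    ring
  have : 0 ≤ z * (b - a) ^ 2 / ((z + a) ^ 2 * (z + b)) := by positivity
  linarith

theorem envy_le_marginalShare_mul (ha : 0 ≤ a) (ht : 0 ≤ t) (htz : t ≤ z) :
    (2 * √2 - 2) * (t / (z + a)) - share z a ≤ marginalShare z a * (t - a) := by
  rcases (add_nonneg (ht.trans htz) ha).eq_or_lt with h0 | hpos
  · simp [share, marginalShare, ← h0]
  have hsq : √2 * √2 = 2 := Real.mul_self_sqrt zero_le_two
  have hgap : z * (t - a) - ((2 * √2 - 2) * t - a) * (z + a)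
      = (a - (√2 - 1) * t) ^ 2 + (√2 - 1) ^ 2 * (t * (z - t)) := by
    linear_combination (-t * z) * hsq
  have hgap_nonneg : 0 ≤ (a - (√2 - 1) * t) ^ 2 + (√2 - 1) ^ 2 * (t * (z - t)) := by
    have := sub_nonneg.2 htz
    positivity
  calc (2 * √2 - 2) * (t / (z + a)) - share z a
      = ((2 * √2 - 2) * t - a) * (z + a) / (z + a) ^ 2 := by
        unfold share
        field_simp
    _ ≤ z * (t - a) / (z + a) ^ 2 := by
        gcongr ?_ / _
        linarith
    _ = marginalShare z a * (t - a) := mul_div_right_comm _ _ _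

end Share

section RivalBid

variable {ι κ : Type*} [Fintype ι] [DecidableEq ι]

/-- The total bid on machine `j` of all users other than `i`. -/
def rivalBid (x : ι → κ → ℝ) (i : ι) (j : κ) : ℝ :=
  ∑ l ∈ univ.erase i, x l j

theorem rivalBid_add_self (x : ι → κ → ℝ) (i : ι) (j : κ) :
    rivalBid x i j + x i j = ∑ l, x l j :=
  sum_erase_add _ _ (mem_univ i)

theorem rivalBid_update (x : ι → κ → ℝ) (i : ι) (b : κ → ℝ) :
    rivalBid (Function.update x i b) i = rivalBid x i := by
  ext j
  refine sum_congr rfl fun l hl => ?_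
  rw [Function.update_of_ne (ne_of_mem_erase hl)]

theorem le_rivalBid {x : ι → κ → ℝ} {j : κ} (hx : ∀ l, 0 ≤ x l j) {i k : ι} (hki : k ≠ i) :
    x k j ≤ rivalBid x i j :=
  single_le_sum (f := fun l => x l j) (fun l _ => hx l) (mem_erase.2 ⟨hki, mem_univ k⟩)

end RivalBid

section Equilibrium

variable {m n : ℕ} {X : Fin m → ℝ} {w x : Fin m → Fin n → ℝ} {i k : Fin m}

theorem util_eq_sum_share (w x : Fin m → Fin n → ℝ) (i : Fin m) :
    util m n w x i = ∑ j, w i j * share (rivalBid x i j) (x i j) := by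
  simp only [util, share, rivalBid_add_self]

theorem util_update (w x : Fin m → Fin n → ℝ) (i : Fin m) (b : Fin n → ℝ) :
    util m n w (Function.update x i b) i = ∑ j, w i j * share (rivalBid x i j) (b j) := by
  rw [util_eq_sum_share, rivalBid_update, Function.update_self]

theorem Feasible.valOf_nonneg (hx : Feasible m n X x) (hw : ∀ j, 0 ≤ w i j) :
    0 ≤ valOf m n w x i k :=
  sum_nonneg fun j _ =>
    mul_nonneg (hw j) (div_nonneg (hx.1 k j) (sum_nonneg fun l _ => hx.1 l j))

theorem Feasible.eq_zero_of_sum_eq_zero (hx : Feasible m n X x) {j : Fin n}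
    (hj : ∑ l, x l j = 0) (l : Fin m) : x l j = 0 :=
  (sum_eq_zero_iff_of_nonneg fun l _ => hx.1 l j).1 hj l (mem_univ l)

theorem IsNash.sum_marginalShare_mul_nonpos (h : IsNash m n X w x) {b : Fin n → ℝ}
    (hb : ∀ j, 0 ≤ b j) (hbX : ∑ j, b j = X i) (hsupp : ∀ j, ∑ l, x l j = 0 → b j = 0) :
    ∑ j, w i j * (marginalShare (rivalBid x i j) (x i j) * (b j - x i j)) ≤ 0 := by
  let gain : ℝ → ℝ := fun e => ∑ j, w i j * share (rivalBid x i j) (x i j + e * (b j - x i j))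
  have hderiv : HasDerivAt gain
      (∑ j, w i j * (marginalShare (rivalBid x i j) (x i j) * (b j - x i j))) 0 := by
    refine HasDerivAt.fun_sum fun j _ => (hasDerivAt_share_add_mul fun hj => ?_).const_mul _
    rw [rivalBid_add_self] at hj
    rw [hsupp j hj, h.1.eq_zero_of_sum_eq_zero hj, sub_zero]
  have hmax : IsMaxOn gain (Set.Icc 0 1) 0 := by
    rintro e ⟨he0, he1⟩
    have hdev := h.2 i (fun j => x i j + e * (b j - x i j))
      (fun j => by
        have := h.1.1 i j
        have := hb j
        have := sub_nonneg.2 he1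
        calc 0 ≤ (1 - e) * x i j + e * b j := by positivity
          _ = x i j + e * (b j - x i j) := by ring)
      (by rw [sum_add_distrib, ← mul_sum, sum_sub_distrib, h.1.2 i, hbX, sub_self, mul_zero,
        add_zero])
    rw [util_update, util_eq_sum_share] at hdev
    simpa [gain] using hdev
  have hcone : (1 : ℝ) ∈ posTangentConeAt (Set.Icc 0 1) 0 := by
    apply mem_posTangentConeAt_of_segment_subset
    rw [zero_add, segment_eq_Icc zero_le_one]
  simpa using hmax.localize.hasFDerivWithinAt_nonpos
    hderiv.hasFDerivAt.hasFDerivWithinAt hcone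

/-- User `i` scales down his own bids to make room for a copy of the bids of user `k`. -/
theorem IsNash.sum_marginalShare_mul_sub_nonpos (h : IsNash m n X w x) (hw : ∀ j, 0 ≤ w i j)
    (hX : X k ≤ X i) (hki : k ≠ i) :
    ∑ j, w i j * (marginalShare (rivalBid x i j) (x i j) * (x k j - x i j)) ≤ 0 := by
  have hx := h.1.1
  have hXk : 0 ≤ X k := h.1.2 k ▸ sum_nonneg fun j _ => hx k j
  have hratio_le : X k / X i ≤ 1 := div_le_one_of_le₀ hX (hXk.trans hX)
  have hbudget : ∑ j, (x k j + (1 - X k / X i) * x i j) = X i := by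
    have : X k / X i * X i = X k := div_mul_cancel_of_imp fun h0 => (hX.trans_eq h0).antisymm hXk
    rw [sum_add_distrib, ← mul_sum, h.1.2 k, h.1.2 i]
    linarith
  refine le_trans (sum_le_sum fun j _ => ?_) (h.sum_marginalShare_mul_nonpos
    (fun j => add_nonneg (hx k j) (mul_nonneg (sub_nonneg.2 hratio_le) (hx i j))) hbudget
    fun j hj => by simp [h.1.eq_zero_of_sum_eq_zero hj])
  have hmarginal : 0 ≤ marginalShare (rivalBid x i j) (x i j) :=
    div_nonneg ((hx k j).trans (le_rivalBid (fun l => hx l j) hki)) (sq_nonneg _)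
  refine mul_le_mul_of_nonneg_left (mul_le_mul_of_nonneg_left ?_ hmarginal) (hw j)
  linarith [mul_nonneg (sub_nonneg.2 hratio_le) (hx i j)]

theorem IsNash.mul_valOf_le_valOf_self (h : IsNash m n X w x) (hw : ∀ j, 0 ≤ w i j)
    (hX : X k ≤ X i) : (2 * √2 - 2) * valOf m n w x i k ≤ valOf m n w x i i := by
  rcases eq_or_ne k i with rfl | hki
  · have hfactor : 2 * √2 - 2 ≤ 1 := by
      linarith [Real.sqrt_le_iff.2 (show (0 : ℝ) ≤ 3 / 2 ∧ 2 ≤ (3 / 2 : ℝ) ^ 2 by norm_num)]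
    exact mul_le_of_le_one_left (h.1.valOf_nonneg hw) hfactor
  rw [← sub_nonpos]
  calc (2 * √2 - 2) * valOf m n w x i k - valOf m n w x i i
      = ∑ j, w i j * ((2 * √2 - 2) * (x k j / (rivalBid x i j + x i j))
          - share (rivalBid x i j) (x i j)) := by
        simp only [valOf, share, rivalBid_add_self, mul_sum, ← sum_sub_distrib]
        exact sum_congr rfl fun j _ => by ring
    _ ≤ ∑ j, w i j * (marginalShare (rivalBid x i j) (x i j) * (x k j - x i j)) := by
        gcongr with j
        · exact hw j
        · exact envy_le_marginalShare_mul (h.1.1 i j) (h.1.1 k j)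
            (le_rivalBid (fun l => h.1.1 l j) hki)
    _ ≤ 0 := h.sum_marginalShare_mul_sub_nonpos hw hX hki

/-- Shares are concave in the own bid, so the first-order (KKT) conditions with multiplier `lam`
suffice for a best response. -/
theorem util_update_le_of_marginalShare_le (hw : ∀ j, 0 ≤ w i j) (hx : ∀ j, 0 ≤ x i j)
    (hz : ∀ j, 0 < rivalBid x i j) {lam : ℝ}
    (hle : ∀ j, w i j * marginalShare (rivalBid x i j) (x i j) ≤ lam)
    (heq : ∀ j, x i j ≠ 0 → w i j * marginalShare (rivalBid x i j) (x i j) = lam)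
    {b : Fin n → ℝ} (hb : ∀ j, 0 ≤ b j) (hsum : ∑ j, b j = ∑ j, x i j) :
    util m n w (Function.update x i b) i ≤ util m n w x i := by
  have hmarginal (j : Fin n) :
      w i j * marginalShare (rivalBid x i j) (x i j) * (b j - x i j) ≤ lam * (b j - x i j) := by
    by_cases hj : x i j = 0
    · exact mul_le_mul_of_nonneg_right (hle j) (by simpa [hj] using hb j)
    · rw [heq j hj]
  rw [util_update, util_eq_sum_share]
  calc ∑ j, w i j * share (rivalBid x i j) (b j)
      ≤ ∑ j, (w i j * share (rivalBid x i j) (x i j) + lam * (b j - x i j)) := by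
        refine sum_le_sum fun j _ => ?_
        have := mul_le_mul_of_nonneg_left (share_le_tangent_s13 (hz j) (hx j) (hb j)) (hw j)
        linarith [hmarginal j]
    _ = ∑ j, w i j * share (rivalBid x i j) (x i j) := by
        rw [sum_add_distrib, ← mul_sum, sum_sub_distrib, hsum, sub_self, mul_zero, add_zero]

theorem Feasible.isNash_of_marginalShare_le (hx : Feasible m n X x) (hw : ∀ i j, 0 ≤ w i j)
    (hz : ∀ i j, 0 < rivalBid x i j) (lam : Fin m → ℝ)
    (hle : ∀ i j, w i j * marginalShare (rivalBid x i j) (x i j) ≤ lam i)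
    (heq : ∀ i j, x i j ≠ 0 → w i j * marginalShare (rivalBid x i j) (x i j) = lam i) :
    IsNash m n X w x :=
  ⟨hx, fun i _ hb hbX => util_update_le_of_marginalShare_le (hw i) (hx.1 i) (hz i) (hle i) (heq i)
    hb (hbX.trans (hx.2 i).symm)⟩

end Equilibrium

section Tightness

/-- User `0`'s weight on machine `1` of the tight game, before normalization and relative to a
weight of `2` on machine `0`; it makes his marginal utilities at `tightBid K` equal. -/
noncomputable def crowdedWeight (K : ℕ) : ℝ :=
  (K + 2 - √2) ^ 2 / K

/-- The weights of the tight game on two machines: user `0` wants both machines, user `1` only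
machine `0`, and each of the remaining `K` users only machine `1`. -/
noncomputable def tightWeight (K : ℕ) : Fin (K + 2) → Fin 2 → ℝ :=
  Fin.cons ![2 / (2 + crowdedWeight K), crowdedWeight K / (2 + crowdedWeight K)]
    (Fin.cons ![1, 0] fun _ => ![0, 1])

/-- The equilibrium bids of the tight game. -/
noncomputable def tightBid (K : ℕ) : Fin (K + 2) → Fin 2 → ℝ :=
  Fin.cons ![√2 - 1, 2 - √2] (Fin.cons ![1, 0] fun _ => ![0, 1])

variable {K : ℕ}

theorem forall_fin_add_two {P : Fin (K + 2) → Prop} :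
    (∀ i, P i) ↔ P 0 ∧ P 1 ∧ ∀ l : Fin K, P l.succ.succ := by
  rw [Fin.forall_fin_succ, Fin.forall_fin_succ, Fin.succ_zero_eq_one]

@[simp]
theorem tightWeight_zero : tightWeight K 0 =
    ![2 / (2 + crowdedWeight K), crowdedWeight K / (2 + crowdedWeight K)] :=
  rfl

@[simp]
theorem tightWeight_one : tightWeight K 1 = ![1, 0] :=
  rfl

@[simp]
theorem tightWeight_succ_succ (l : Fin K) : tightWeight K l.succ.succ = ![0, 1] :=
  rfl

@[simp]
theorem tightBid_zero : tightBid K 0 = ![√2 - 1, 2 - √2] :=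
  rfl

@[simp]
theorem tightBid_one : tightBid K 1 = ![1, 0] :=
  rfl

@[simp]
theorem tightBid_succ_succ (l : Fin K) : tightBid K l.succ.succ = ![0, 1] :=
  rfl

theorem sqrt_two_lt_two : √2 < 2 :=
  Real.sqrt_lt_self_iff.2 one_lt_two

theorem add_two_sub_sqrt_two_pos (K : ℕ) : 0 < K + 2 - √2 := by
  linarith [sqrt_two_lt_two, K.cast_nonneg (α := ℝ)]

theorem crowdedWeight_nonneg (K : ℕ) : 0 ≤ crowdedWeight K :=
  div_nonneg (sq_nonneg _) K.cast_nonneg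

theorem crowdedWeight_pos (hK : 0 < K) : 0 < crowdedWeight K :=
  div_pos (pow_pos (add_two_sub_sqrt_two_pos K) 2) (Nat.cast_pos.2 hK)

theorem tightWeight_nonneg (i : Fin (K + 2)) (j : Fin 2) : 0 ≤ tightWeight K i j := by
  have := crowdedWeight_nonneg K
  revert i j
  rw [forall_fin_add_two]
  simp only [Fin.forall_fin_two, tightWeight_zero, tightWeight_one, tightWeight_succ_succ,
    Matrix.cons_val_zero, Matrix.cons_val_one, zero_le_one, le_refl, and_self, implies_true,
    and_true]
  constructor <;> positivity

theorem sum_tightWeight (i : Fin (K + 2)) : ∑ j, tightWeight K i j = 1 := by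
  have : 2 + crowdedWeight K ≠ 0 := by linarith [crowdedWeight_nonneg K]
  revert i
  simp [forall_fin_add_two, ← add_div, this]

theorem exists_ne_tightWeight_pos (hK : 0 < K) (j : Fin 2) :
    ∃ i k : Fin (K + 2), i ≠ k ∧ 0 < tightWeight K i j ∧ 0 < tightWeight K k j := by
  have := crowdedWeight_pos hK
  revert j
  rw [Fin.forall_fin_two]
  refine ⟨⟨0, 1, Fin.zero_ne_one, ?_, ?_⟩,
    ⟨0, Fin.succ (Fin.succ ⟨0, hK⟩), (Fin.succ_ne_zero _).symm, ?_, ?_⟩⟩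
  all_goals
    simp only [tightWeight_zero, tightWeight_one, tightWeight_succ_succ, Matrix.cons_val_zero,
      Matrix.cons_val_one]
    positivity

theorem feasible_tightBid : Feasible (K + 2) 2 (fun _ => 1) (tightBid K) := by
  constructor
  · rw [forall_fin_add_two]
    simp [Fin.forall_fin_two, sqrt_two_lt_two.le]
  · rw [forall_fin_add_two]
    simp only [Fin.sum_univ_two, tightBid_zero, tightBid_one,
      tightBid_succ_succ, Matrix.cons_val_zero, Matrix.cons_val_one]
    norm_num

theorem sum_tightBid_zero : ∑ l, tightBid K l 0 = √2 := by
  simp [Fin.sum_univ_succ (n := K + 1), Fin.sum_univ_succ (n := K)]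

theorem sum_tightBid_one : ∑ l, tightBid K l 1 = K + 2 - √2 := by
  simp only [Fin.sum_univ_succ (n := K + 1), Fin.sum_univ_succ (n := K), tightBid_zero,
    Fin.succ_zero_eq_one, tightBid_one, tightBid_succ_succ, Matrix.cons_val_one,
    Matrix.cons_val_fin_one, sum_const, card_univ, Fintype.card_fin, nsmul_eq_mul]
  ring

theorem rivalBid_tightBid (i : Fin (K + 2)) :
    rivalBid (tightBid K) i = ![√2 - tightBid K i 0, K + 2 - √2 - tightBid K i 1] := by
  ext j
  rw [eq_sub_of_add_eq (rivalBid_add_self (tightBid K) i j)]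
  revert j
  simp [Fin.forall_fin_two, sum_tightBid_zero, sum_tightBid_one]

theorem rivalBid_tightBid_zero : rivalBid (tightBid K) 0 = ![1, (K : ℝ)] := by
  rw [rivalBid_tightBid]
  refine congrArg₂ (![·, ·]) ?_ ?_ <;> simp

theorem rivalBid_tightBid_one : rivalBid (tightBid K) 1 = ![√2 - 1, K + 2 - √2] := by
  rw [rivalBid_tightBid]
  simp

theorem rivalBid_tightBid_succ_succ (l : Fin K) :
    rivalBid (tightBid K) l.succ.succ = ![√2, K + 1 - √2] := by
  rw [rivalBid_tightBid]
  refine congrArg₂ (![·, ·]) ?_ ?_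
  · simp
  · simp only [tightBid_succ_succ, Matrix.cons_val_one, Matrix.cons_val_fin_one]
    ring

theorem rivalBid_tightBid_pos (hK : 0 < K) (i : Fin (K + 2)) (j : Fin 2) :
    0 < rivalBid (tightBid K) i j := by
  have hK' : (1 : ℝ) ≤ K := Nat.one_le_cast.2 hK
  revert i j
  rw [forall_fin_add_two]
  simp only [Fin.forall_fin_two, rivalBid_tightBid_zero, rivalBid_tightBid_one,
    rivalBid_tightBid_succ_succ, Matrix.cons_val_zero, Matrix.cons_val_one]
  refine ⟨⟨one_pos, by linarith⟩, ⟨sub_pos.2 Real.one_lt_sqrt_two, add_two_sub_sqrt_two_pos K⟩,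
    fun _ => ⟨by positivity, by linarith [sqrt_two_lt_two]⟩⟩

/-- The marginal utility of each user's budget at `tightBid K`. -/
noncomputable def tightMultiplier (K : ℕ) : Fin (K + 2) → ℝ :=
  Fin.cons (1 / (2 + crowdedWeight K))
    (Fin.cons (marginalShare (√2 - 1) 1) fun _ => marginalShare (K + 1 - √2) 1)

theorem tightMultiplier_zero : tightMultiplier K 0 = 1 / (2 + crowdedWeight K) :=
  rfl

theorem tightMultiplier_one : tightMultiplier K 1 = marginalShare (√2 - 1) 1 :=
  rfl

theorem tightMultiplier_succ_succ (l : Fin K) :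
    tightMultiplier K l.succ.succ = marginalShare (K + 1 - √2) 1 :=
  rfl

theorem marginalShare_one_sqrt_two_sub_one : marginalShare 1 (√2 - 1) = 1 / 2 := by
  rw [marginalShare, add_sub_cancel, Real.sq_sqrt zero_le_two]

theorem marginalShare_two_sub_sqrt_two (K : ℕ) :
    marginalShare K (2 - √2) = 1 / crowdedWeight K := by
  rw [marginalShare, crowdedWeight, one_div_div, add_sub_assoc]

theorem tightWeight_mul_marginalShare_zero (hK : 0 < K) (j : Fin 2) :
    tightWeight K 0 j * marginalShare (rivalBid (tightBid K) 0 j) (tightBid K 0 j) =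
      tightMultiplier K 0 := by
  have := crowdedWeight_pos hK
  revert j
  simp only [Fin.forall_fin_two, tightWeight_zero, tightBid_zero, rivalBid_tightBid_zero,
    Matrix.cons_val_zero, Matrix.cons_val_one, marginalShare_one_sqrt_two_sub_one,
    marginalShare_two_sub_sqrt_two, tightMultiplier_zero]
  constructor <;> field_simp

theorem tightMultiplier_nonneg (hK : 0 < K) (i : Fin (K + 2)) : 0 ≤ tightMultiplier K i := by
  have hK' : (1 : ℝ) ≤ K := Nat.one_le_cast.2 hK
  have := crowdedWeight_nonneg K
  revert i
  rw [forall_fin_add_two, tightMultiplier_zero, tightMultiplier_one]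
  refine ⟨by positivity, ?_, fun _ => ?_⟩
  · exact div_nonneg (sub_nonneg.2 Real.one_lt_sqrt_two.le) (sq_nonneg _)
  · exact div_nonneg (by linarith [sqrt_two_lt_two]) (sq_nonneg _)

theorem tightWeight_mul_marginalShare_le (hK : 0 < K) (i : Fin (K + 2)) (j : Fin 2) :
    tightWeight K i j * marginalShare (rivalBid (tightBid K) i j) (tightBid K i j) ≤
      tightMultiplier K i := by
  have hlam := tightMultiplier_nonneg hK
  revert i j
  rw [forall_fin_add_two]
  rw [forall_fin_add_two] at hlam
  refine ⟨fun j => (tightWeight_mul_marginalShare_zero hK j).le, ?_, fun l => ?_⟩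
  · simpa [Fin.forall_fin_two, rivalBid_tightBid_one, tightMultiplier_one] using hlam.2.1
  · simpa [Fin.forall_fin_two, rivalBid_tightBid_succ_succ, tightMultiplier_succ_succ]
      using hlam.2.2 l

theorem tightWeight_mul_marginalShare_eq (hK : 0 < K) (i : Fin (K + 2)) (j : Fin 2)
    (hij : tightBid K i j ≠ 0) :
    tightWeight K i j * marginalShare (rivalBid (tightBid K) i j) (tightBid K i j) =
      tightMultiplier K i := by
  revert i j
  rw [forall_fin_add_two]
  refine ⟨fun j _ => tightWeight_mul_marginalShare_zero hK j, ?_, fun l => ?_⟩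
  · simp [Fin.forall_fin_two, rivalBid_tightBid_one, tightMultiplier_one]
  · simp [Fin.forall_fin_two, rivalBid_tightBid_succ_succ, tightMultiplier_succ_succ]

theorem isNash_tightBid (hK : 0 < K) :
    IsNash (K + 2) 2 (fun _ => 1) (tightWeight K) (tightBid K) :=
  feasible_tightBid.isNash_of_marginalShare_le tightWeight_nonneg (rivalBid_tightBid_pos hK)
    (tightMultiplier K) (tightWeight_mul_marginalShare_le hK) (tightWeight_mul_marginalShare_eq hK)

theorem valOf_tightBid_zero_one :
    valOf (K + 2) 2 (tightWeight K) (tightBid K) 0 1 = √2 / (2 + crowdedWeight K) := by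
  simp only [valOf, Fin.sum_univ_two, sum_tightBid_zero, tightWeight_zero, tightBid_one,
    Matrix.cons_val_zero, Matrix.cons_val_one, zero_div, mul_zero, add_zero]
  rw [div_mul_div_comm, mul_one, mul_comm, ← div_div, Real.div_sqrt]

theorem valOf_tightBid_zero_zero (hK : 0 < K) :
    valOf (K + 2) 2 (tightWeight K) (tightBid K) 0 0 =
      (2 * √2 - 2 + (2 - √2) ^ 2 / (K * √2)) *
        valOf (K + 2) 2 (tightWeight K) (tightBid K) 0 1 := by
  have hK' : (K : ℝ) ≠ 0 := Nat.cast_ne_zero.2 hK.ne'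
  have hsq : √2 ^ 2 = 2 := Real.sq_sqrt zero_le_two
  have hcontested : 2 * ((√2 - 1) / √2) = √2 * (√2 - 1) := by
    rw [← mul_div_assoc, mul_div_right_comm, Real.div_sqrt]
  have hcrowded : crowdedWeight K * ((2 - √2) / (K + 2 - √2)) =
      2 - √2 + (2 - √2) ^ 2 / K := by
    have := (add_two_sub_sqrt_two_pos K).ne'
    rw [crowdedWeight]
    field_simp
    ring
  have henvied : (2 * √2 - 2 + (2 - √2) ^ 2 / (K * √2)) * √2 =
      √2 * (√2 - 1) + (2 - √2 + (2 - √2) ^ 2 / K) := by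
    field_simp
    linear_combination K * hsq
  rw [valOf_tightBid_zero_one, ← mul_div_assoc, henvied, ← hcontested, ← hcrowded]
  simp only [valOf, Fin.sum_univ_two, sum_tightBid_zero, sum_tightBid_one, tightWeight_zero,
    tightBid_zero, Matrix.cons_val_zero, Matrix.cons_val_one]
  ring

theorem exists_valOf_tightBid_lt {ε : ℝ} (hε : 0 < ε) : ∃ K : ℕ, 0 < K ∧
    valOf (K + 2) 2 (tightWeight K) (tightBid K) 0 0 <
      (2 * √2 - 2 + ε) * valOf (K + 2) 2 (tightWeight K) (tightBid K) 0 1 := by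
  obtain ⟨K, hK⟩ := exists_nat_gt (1 / ε)
  have hK_real : (0 : ℝ) < K := (one_div_pos.2 hε).trans hK
  have hK_pos : 0 < K := Nat.cast_pos.1 hK_real
  have herror : (2 - √2) ^ 2 / (K * √2) < ε := by
    have hnum : (2 - √2) ^ 2 ≤ 1 :=
      pow_le_one₀ (sub_nonneg.2 sqrt_two_lt_two.le) (by linarith [Real.one_lt_sqrt_two])
    calc (2 - √2) ^ 2 / (K * √2) ≤ 1 / K := by
          gcongr
          exact le_mul_of_one_le_right hK_real.le Real.one_lt_sqrt_two.le
      _ < ε := (one_div_lt hε hK_real).1 hK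
  have hval : 0 < valOf (K + 2) 2 (tightWeight K) (tightBid K) 0 1 := by
    have := crowdedWeight_pos hK_pos
    rw [valOf_tightBid_zero_one]
    positivity
  refine ⟨K, hK_pos, ?_⟩
  rw [valOf_tightBid_zero_zero hK_pos]
  gcongr

end Tightness

theorem multiPlayer_envy_freeness_general :
    (∀ (m n : ℕ) (X : Fin m → ℝ) (w x : Fin m → Fin n → ℝ), IsNash m n X w x →
      ∀ i k : Fin m, (∀ j, 0 ≤ w i j) → X k ≤ X i →
        (2 * √2 - 2) * valOf m n w x i k ≤ valOf m n w x i i) ∧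
    (∀ ε : ℝ, 0 < ε →
      ∃ (m n : ℕ) (w : Fin m → Fin n → ℝ),
        (∀ i j, 0 ≤ w i j) ∧ (∀ i, ∑ j, w i j = 1) ∧
        (∀ j, ∃ i k : Fin m, i ≠ k ∧ 0 < w i j ∧ 0 < w k j) ∧
        ∃ x : Fin m → Fin n → ℝ, IsNash m n (fun _ => 1) w x ∧
          ∃ i k : Fin m, valOf m n w x i i < (2 * √2 - 2 + ε) * valOf m n w x i k) := by
  refine ⟨fun m n X w x h i k hw hX => h.mul_valOf_le_valOf_self hw hX, fun ε hε => ?_⟩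
  obtain ⟨K, hK, hlt⟩ := exists_valOf_tightBid_lt hε
  exact ⟨K + 2, 2, tightWeight K, tightWeight_nonneg, sum_tightWeight,
    exists_ne_tightWeight_pos hK, tightBid K, isNash_tightBid hK, 0, 1, hlt⟩

/-- Theorem 3, envy-freeness: in any strongly competitive normalized
`m`-player price-anticipating allocation game, every Nash equilibrium allocation
satisfies `U_i(r_i) ≥ (2√2 - 2) · U_i(r_k)` for all users `i, k`; i.e., the
envy-freeness of the game is at least `2√2 - 2`, and this bound is tight in the worst
case. -/
theorem multiPlayer_envy_freeness :
    (∀ (m n : ℕ) (w : Fin m → Fin n → ℝ),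
      (∀ i j, 0 ≤ w i j) → (∀ i, ∑ j, w i j = 1) →
      (∀ j, ∃ i k : Fin m, i ≠ k ∧ 0 < w i j ∧ 0 < w k j) →
      ∀ x : Fin m → Fin n → ℝ, IsNash m n (fun _ => 1) w x →
        ∀ i k : Fin m,
          (2 * Real.sqrt 2 - 2) * valOf m n w x i k ≤ valOf m n w x i i) ∧
    (∀ ε : ℝ, 0 < ε →
      ∃ (m n : ℕ) (w : Fin m → Fin n → ℝ),
        (∀ i j, 0 ≤ w i j) ∧ (∀ i, ∑ j, w i j = 1) ∧
        (∀ j, ∃ i k : Fin m, i ≠ k ∧ 0 < w i j ∧ 0 < w k j) ∧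
        ∃ x : Fin m → Fin n → ℝ, IsNash m n (fun _ => 1) w x ∧
          ∃ i k : Fin m,
            valOf m n w x i i < (2 * Real.sqrt 2 - 2 + ε) * valOf m n w x i k) := by
  exact ⟨fun m n w hw _ _ x h i k =>
    multiPlayer_envy_freeness_general.1 m n _ w x h i k (hw i) le_rfl,
    multiPlayer_envy_freeness_general.2⟩
end

section
/- (Correctness of the best-response algorithm) Let n ≥ 1, let w_j > 0 and y_j > 0 for j = 1,…,n with w_1/y_1 ≥ w_2/y_2 ≥ … ≥ w_n/y_n, and let X > 0. Let k be the largest index t ∈ {1,…,n} such that (√(w_t y_t)/Σ_{i=1}^t √(w_i y_i))·(X + Σ_{i=1}^t y_i) − y_t ≥ 0 (such t exists since t = 1 satisfies the condition). Define x_j = (√(w_j y_j)/Σ_{i=1}^k √(w_i y_i))·(X + Σ_{i=1}^k y_i) − y_j for 1 ≤ j ≤ k and x_j = 0 for j > k. Then x is feasible (x_j ≥ 0 for all j and Σ_j x_j = X) and x maximizes U(x) = Σ_{j=1}^n w_j x_j/(x_j + y_j) over all feasible vectors. -/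
open Finset

/-!
The utility is concave, so a feasible bid vector is optimal as soon as its marginal utilities
`w j * y j / (x j + y j) ^ 2` are at most a common multiplier, with equality wherever `x j ≠ 0`.
If exactly the machines of a set `A` receive bids, equality forces `x j + y j` to be proportional
to `√(w j * y j)`, and the budget fixes the factor `(X + ∑ i ∈ A, y i) / ∑ i ∈ A, √(w i * y i)`.
It remains to find an `A` for which these bids are nonnegative on `A` and nonpositive off it.
Relative to `y j`, the bid on `j` increases with `w j / y j`, so `A` may be taken to be an initial
segment. Adding a machine to `A` preserves the sign of its own bid, so the failure of the
algorithm's test at the successor of `k` says that the bids for `A = Iic k` are negative there.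
-/

namespace BestResponse

section Lagrangian

variable {ι R : Type*} [CommRing R] [PartialOrder R] [IsOrderedRing R]

theorem sum_le_sum_of_supergradient {s : Finset ι} {f : ι → R → R} {g x x' : ι → R} {μ : R}
    (hf : ∀ j ∈ s, f j (x' j) ≤ f j (x j) + g j * (x' j - x j))
    (hx' : ∀ j ∈ s, 0 ≤ x' j) (hg : ∀ j ∈ s, g j ≤ μ) (hslack : ∀ j ∈ s, x j ≠ 0 → g j = μ)
    (hsum : ∑ j ∈ s, x' j = ∑ j ∈ s, x j) :
    ∑ j ∈ s, f j (x' j) ≤ ∑ j ∈ s, f j (x j) := by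
  have hterm (j) (hj : j ∈ s) : f j (x' j) ≤ f j (x j) + μ * (x' j - x j) := by
    have hcompl : g j * x j = μ * x j := by
      rcases eq_or_ne (x j) 0 with h | h
      · simp only [h, mul_zero]
      · rw [hslack j hj h]
    calc f j (x' j) ≤ f j (x j) + (g j * x' j - g j * x j) := by
          simpa only [mul_sub] using hf j hj
      _ ≤ f j (x j) + (μ * x' j - μ * x j) := by
          rw [hcompl]
          gcongr
          exacts [hx' j hj, hg j hj]
      _ = f j (x j) + μ * (x' j - x j) := by rw [mul_sub]
  calc ∑ j ∈ s, f j (x' j) ≤ ∑ j ∈ s, (f j (x j) + μ * (x' j - x j)) := sum_le_sum hterm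
    _ = ∑ j ∈ s, f j (x j) := by
      rw [sum_add_distrib, ← mul_sum, sum_sub_distrib, hsum, sub_self, mul_zero, add_zero]

end Lagrangian

theorem div_add_le_tangent {K : Type*} [Field K] [LinearOrder K] [IsStrictOrderedRing K]
    {x z y : K} (hy : 0 ≤ y) (hx : 0 < x + y) (hz : 0 < z + y) :
    z / (z + y) ≤ x / (x + y) + y / (x + y) ^ 2 * (z - x) := by
  have hgap : x / (x + y) + y / (x + y) ^ 2 * (z - x) - z / (z + y) =
      y * (z - x) ^ 2 / ((x + y) ^ 2 * (z + y)) := by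
    field_simp
    ring
  rw [← sub_nonneg, hgap]
  positivity

theorem sqrt_mul_div_right (w : ℝ) {y : ℝ} (hy : 0 ≤ y) : √(w * y) / y = √(w / y) := by
  rw [Real.sqrt_mul' w hy, mul_div_assoc, Real.sqrt_div_self', mul_one_div, Real.sqrt_div' w hy]

section Optimality

variable {ι : Type*} [Fintype ι] {w y x : ι → ℝ} {X μ : ℝ}

/-- The utility of the bid vector `x` against the opposing total bids `y`, with weights `w`. -/
noncomputable def utility (w y x : ι → ℝ) : ℝ := ∑ j, w j * (x j / (x j + y j))

/-- The feasible bid vectors of a user with budget `X`, who has to spend it entirely. -/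
def feasibleBids (ι : Type*) [Fintype ι] (X : ℝ) : Set (ι → ℝ) :=
  {x | (∀ j, 0 ≤ x j) ∧ ∑ j, x j = X}

theorem isMaxOn_utility_of_kkt (hw : ∀ j, 0 ≤ w j) (hy : ∀ j, 0 < y j)
    (hx : x ∈ feasibleBids ι X) (hle : ∀ j, w j * y j / (x j + y j) ^ 2 ≤ μ)
    (heq : ∀ j, x j ≠ 0 → w j * y j / (x j + y j) ^ 2 = μ) :
    IsMaxOn (utility w y) (feasibleBids ι X) x := by
  rintro x' ⟨hx'_nonneg, hx'_sum⟩
  refine sum_le_sum_of_supergradient (f := fun j z => w j * (z / (z + y j)))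
    (fun j _ => ?_) (fun j _ => hx'_nonneg j) (fun j _ => hle j) (fun j _ => heq j)
    (hx'_sum.trans hx.2.symm)
  calc w j * (x' j / (x' j + y j))
      ≤ w j * (x j / (x j + y j) + y j / (x j + y j) ^ 2 * (x' j - x j)) :=
        mul_le_mul_of_nonneg_left (div_add_le_tangent (hy j).le
          (add_pos_of_nonneg_of_pos (hx.1 j) (hy j))
          (add_pos_of_nonneg_of_pos (hx'_nonneg j) (hy j))) (hw j)
    _ = w j * (x j / (x j + y j)) + w j * y j / (x j + y j) ^ 2 * (x' j - x j) := by ring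

end Optimality

section InteriorBid

variable {ι : Type*} {w y : ι → ℝ} {X : ℝ} {A : Finset ι} {i j : ι}

/-- The bid on machine `j` that equalizes marginal utilities when the budget `X` is spread over
the machines of `A`. It may be negative, and it is also evaluated at machines outside `A`, where
its sign tells whether the machine is worth adding. -/
noncomputable def interiorBid (w y : ι → ℝ) (X : ℝ) (A : Finset ι) (j : ι) : ℝ :=
  √(w j * y j) / (∑ i ∈ A, √(w i * y i)) * (X + ∑ i ∈ A, y i) - y j

/-- The Lagrange multiplier of the budget constraint when the bids `interiorBid w y X A` are
placed on the machines of `A`, that is, their common marginal utility. -/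
noncomputable def multiplier (w y : ι → ℝ) (X : ℝ) (A : Finset ι) : ℝ :=
  ((∑ i ∈ A, √(w i * y i)) / (X + ∑ i ∈ A, y i)) ^ 2

theorem sum_sqrt_mul_pos (hw : ∀ j, 0 < w j) (hy : ∀ j, 0 < y j) (hA : A.Nonempty) :
    0 < ∑ i ∈ A, √(w i * y i) :=
  sum_pos (fun i _ => Real.sqrt_pos.mpr (mul_pos (hw i) (hy i))) hA

theorem sum_interiorBid (hS : ∑ i ∈ A, √(w i * y i) ≠ 0) :
    ∑ j ∈ A, interiorBid w y X A j = X := by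
  simp only [interiorBid]
  rw [sum_sub_distrib, ← sum_mul, ← sum_div, div_self hS, one_mul, add_sub_cancel_right]

theorem marginal_interiorBid (hj : 0 < w j * y j) :
    w j * y j / (interiorBid w y X A j + y j) ^ 2 = multiplier w y X A := by
  have hs : √(w j * y j) ≠ 0 := (Real.sqrt_pos.mpr hj).ne'
  calc w j * y j / (interiorBid w y X A j + y j) ^ 2
      = (√(w j * y j) / (√(w j * y j) / (∑ i ∈ A, √(w i * y i)) * (X + ∑ i ∈ A, y i))) ^ 2 := by
        rw [div_pow, Real.sq_sqrt hj.le, interiorBid, sub_add_cancel]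
    _ = multiplier w y X A := by
        rw [multiplier, div_mul_eq_mul_div, div_div_eq_mul_div, mul_div_mul_left _ _ hs]

theorem div_le_multiplier_of_interiorBid_nonpos (hwj : 0 ≤ w j) (hyj : 0 < y j)
    (hS : 0 < ∑ i ∈ A, √(w i * y i)) (hXY : 0 < X + ∑ i ∈ A, y i)
    (hj : interiorBid w y X A j ≤ 0) : w j / y j ≤ multiplier w y X A := by
  have hsqrt : √(w j * y j) / y j ≤ (∑ i ∈ A, √(w i * y i)) / (X + ∑ i ∈ A, y i) := by
    rwa [interiorBid, sub_nonpos, div_mul_eq_mul_div, div_le_iff₀ hS, mul_comm (y j),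
      ← div_le_div_iff₀ hyj hXY] at hj
  calc w j / y j = (√(w j * y j) / y j) ^ 2 := by
        rw [sqrt_mul_div_right _ hyj.le, Real.sq_sqrt (div_nonneg hwj hyj.le)]
    _ ≤ multiplier w y X A := pow_le_pow_left₀ (by positivity) hsqrt 2

theorem interiorBid_div (hyj : 0 < y j) :
    interiorBid w y X A j / y j =
      √(w j / y j) / (∑ i ∈ A, √(w i * y i)) * (X + ∑ i ∈ A, y i) - 1 := by
  rw [interiorBid, sub_div, div_self hyj.ne', ← sqrt_mul_div_right _ hyj.le]
  ring

theorem interiorBid_div_le_interiorBid_div (hyi : 0 < y i) (hyj : 0 < y j)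
    (hXY : 0 ≤ X + ∑ i ∈ A, y i) (hij : w j / y j ≤ w i / y i) :
    interiorBid w y X A j / y j ≤ interiorBid w y X A i / y i := by
  rw [interiorBid_div hyi, interiorBid_div hyj]
  gcongr

theorem interiorBid_insert_self [DecidableEq ι] (hj : j ∉ A)
    (hS : 0 < ∑ i ∈ A, √(w i * y i)) :
    interiorBid w y X (insert j A) j =
      (∑ i ∈ A, √(w i * y i)) / (√(w j * y j) + ∑ i ∈ A, √(w i * y i)) *
        interiorBid w y X A j := by
  have hS' : √(w j * y j) + ∑ i ∈ A, √(w i * y i) ≠ 0 := by positivity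
  simp only [interiorBid, sum_insert hj]
  field_simp
  ring

end InteriorBid

section ActiveSet

variable {ι : Type*} [Fintype ι] {w y : ι → ℝ} {X : ℝ} {A : Finset ι}

theorem indicator_interiorBid_mem_feasibleBids (hS : ∑ i ∈ A, √(w i * y i) ≠ 0)
    (hin : ∀ j ∈ A, 0 ≤ interiorBid w y X A j) :
    (A : Set ι).indicator (interiorBid w y X A) ∈ feasibleBids ι X :=
  ⟨Set.indicator_nonneg hin, (sum_indicator_subset _ (subset_univ A)).trans (sum_interiorBid hS)⟩

theorem isMaxOn_utility_indicator_interiorBid (hw : ∀ j, 0 < w j) (hy : ∀ j, 0 < y j)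
    (hX : 0 ≤ X) (hA : A.Nonempty) (hin : ∀ j ∈ A, 0 ≤ interiorBid w y X A j)
    (hout : ∀ j ∉ A, interiorBid w y X A j ≤ 0) :
    IsMaxOn (utility w y) (feasibleBids ι X) ((A : Set ι).indicator (interiorBid w y X A)) := by
  have hS := sum_sqrt_mul_pos hw hy hA
  have hXY : 0 < X + ∑ i ∈ A, y i :=
    add_pos_of_nonneg_of_pos hX (sum_pos (fun i _ => hy i) hA)
  have hactive (j) (hj : j ∈ A) : w j * y j /
      ((A : Set ι).indicator (interiorBid w y X A) j + y j) ^ 2 = multiplier w y X A := by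
    rw [Set.indicator_of_mem (mem_coe.mpr hj), marginal_interiorBid (mul_pos (hw j) (hy j))]
  refine isMaxOn_utility_of_kkt (μ := multiplier w y X A) (fun j => (hw j).le) hy
    (indicator_interiorBid_mem_feasibleBids hS.ne' hin) (fun j => ?_)
    (fun j hj => hactive j (Set.mem_of_indicator_ne_zero hj))
  by_cases hj : j ∈ A
  · exact (hactive j hj).le
  · rw [Set.indicator_of_notMem (mem_coe.not.mpr hj), zero_add, sq,
      mul_div_mul_right _ _ (hy j).ne']
    exact div_le_multiplier_of_interiorBid_nonpos (hw j).le (hy j) hS hXY (hout j hj)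

end ActiveSet

section Sorted

variable {ι : Type*} [LinearOrder ι] [LocallyFiniteOrderBot ι] {w y : ι → ℝ} {X : ℝ} {j k : ι}

theorem interiorBid_Iic_nonneg (hyj : 0 < y j) (hyk : 0 < y k) (hXY : 0 ≤ X + ∑ i ∈ Iic k, y i)
    (hsort : Antitone fun j => w j / y j) (hk : 0 ≤ interiorBid w y X (Iic k) k) (hj : j ≤ k) :
    0 ≤ interiorBid w y X (Iic k) j := by
  have hdiv : 0 ≤ interiorBid w y X (Iic k) j / y j :=
    (div_nonneg hk hyk.le).trans (interiorBid_div_le_interiorBid_div hyj hyk hXY (hsort hj))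
  rwa [le_div_iff₀ hyj, zero_mul] at hdiv

theorem interiorBid_Iic_nonpos [SuccOrder ι] (hw : ∀ j, 0 < w j) (hy : ∀ j, 0 < y j)
    (hXY : 0 ≤ X + ∑ i ∈ Iic k, y i) (hsort : Antitone fun j => w j / y j)
    (hsucc : interiorBid w y X (Iic (Order.succ k)) (Order.succ k) ≤ 0) (hj : k < j) :
    interiorBid w y X (Iic k) j ≤ 0 := by
  have hmax : ¬IsMax k := not_isMax_of_lt hj
  have hIic : Iic (Order.succ k) = insert (Order.succ k) (Iic k) := by
    rw [← Iio_insert, Iio_succ_eq_Iic_of_not_isMax hmax]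
  have hnotMem : Order.succ k ∉ Iic k := by
    simpa only [mem_Iic, not_le] using Order.lt_succ_of_not_isMax hmax
  have hS : 0 < ∑ i ∈ Iic k, √(w i * y i) := sum_sqrt_mul_pos hw hy nonempty_Iic
  have hsucc' : interiorBid w y X (Iic k) (Order.succ k) ≤ 0 := by
    rw [hIic, interiorBid_insert_self hnotMem hS] at hsucc
    exact nonpos_of_mul_nonpos_right hsucc (by positivity)
  have hdiv : interiorBid w y X (Iic k) j / y j ≤ 0 :=
    (interiorBid_div_le_interiorBid_div (hy _) (hy j) hXY
      (hsort (Order.succ_le_of_lt hj))).trans (div_nonpos_of_nonpos_of_nonneg hsucc' (hy _).le)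
  rwa [div_le_iff₀ (hy j), zero_mul] at hdiv

end Sorted

end BestResponse

/-- Correctness of the best-response algorithm: with machines sorted so
that `w 0 / y 0 ≥ w 1 / y 1 ≥ … ≥ w (n-1) / y (n-1)` (all weights and opposing bids
positive) and budget `X > 0`, let `k` be the largest index such that
`(√(w k · y k) / ∑_{i ≤ k} √(w i · y i)) · (X + ∑_{i ≤ k} y i) - y k ≥ 0`. Then the bid
vector produced by the algorithm — `x j = (√(w j · y j) / ∑_{i ≤ k} √(w i · y i)) ·
(X + ∑_{i ≤ k} y i) - y j` for `j ≤ k` and `x j = 0` otherwise — is feasible and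
maximizes `U(x) = ∑ j, w j · x j / (x j + y j)` over all feasible bid vectors. -/
theorem bestResponse_algorithm_correct (n : ℕ) (hn : 1 ≤ n)
    (w y : Fin n → ℝ) (hw : ∀ j, 0 < w j) (hy : ∀ j, 0 < y j)
    (hsort : ∀ i j : Fin n, i ≤ j → w j / y j ≤ w i / y i)
    (X : ℝ) (hX : 0 < X) (k : Fin n)
    (hk : 0 ≤ Real.sqrt (w k * y k) / (∑ i ∈ Finset.Iic k, Real.sqrt (w i * y i)) *
            (X + ∑ i ∈ Finset.Iic k, y i) - y k)
    (hkmax : ∀ t : Fin n, k < t →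
      Real.sqrt (w t * y t) / (∑ i ∈ Finset.Iic t, Real.sqrt (w i * y i)) *
          (X + ∑ i ∈ Finset.Iic t, y i) - y t < 0) :
    let x : Fin n → ℝ := fun j =>
      if j ≤ k then
        Real.sqrt (w j * y j) / (∑ i ∈ Finset.Iic k, Real.sqrt (w i * y i)) *
            (X + ∑ i ∈ Finset.Iic k, y i) - y j
      else 0
    (∀ j, 0 ≤ x j) ∧ (∑ j, x j = X) ∧
    ∀ x' : Fin n → ℝ, (∀ j, 0 ≤ x' j) → ∑ j, x' j = X →
      ∑ j, w j * (x' j / (x' j + y j)) ≤ ∑ j, w j * (x j / (x j + y j)) := by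
  intro x
  have hx : x = (Iic k : Set (Fin n)).indicator (BestResponse.interiorBid w y X (Iic k)) := by
    ext j
    simp only [x, Set.indicator_apply, coe_Iic, Set.mem_Iic, BestResponse.interiorBid]
  have hXY : 0 ≤ X + ∑ i ∈ Iic k, y i := add_nonneg hX.le (sum_nonneg fun i _ => (hy i).le)
  have hin : ∀ j ∈ Iic k, 0 ≤ BestResponse.interiorBid w y X (Iic k) j := fun j hj =>
    BestResponse.interiorBid_Iic_nonneg (hy j) (hy k) hXY (hsort · ·) hk (mem_Iic.mp hj)
  have hout : ∀ j ∉ Iic k, BestResponse.interiorBid w y X (Iic k) j ≤ 0 := fun j hj =>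
    have hkj : k < j := by simpa only [mem_Iic, not_le] using hj
    BestResponse.interiorBid_Iic_nonpos hw hy hXY (hsort · ·)
      (hkmax _ (Order.lt_succ_of_not_isMax (not_isMax_of_lt hkj))).le hkj
  have hfeas := BestResponse.indicator_interiorBid_mem_feasibleBids
    (BestResponse.sum_sqrt_mul_pos hw hy nonempty_Iic).ne' hin
  have hmax := BestResponse.isMaxOn_utility_indicator_interiorBid hw hy hX.le nonempty_Iic hin hout
  rw [← hx] at hfeas hmax
  exact ⟨hfeas.1, hfeas.2, fun x' hx'_nonneg hx'_sum => hmax ⟨hx'_nonneg, hx'_sum⟩⟩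
end

section
/- (Monotone support of the best response) Let n ≥ 1, let w_j ≥ 0 and y_j > 0 for j = 1,…,n, let X > 0, and let x* maximize U(x) = Σ_{j=1}^n w_j x_j/(x_j + y_j) over all x with x_j ≥ 0 and Σ_j x_j = X. If i and j are indices with w_j > 0, w_i/y_i ≥ w_j/y_j, and x*_j > 0, then x*_i > 0. Equivalently, after sorting the machines so that w_1/y_1 ≥ … ≥ w_n/y_n, if x*_i = 0 then x*_j = 0 for every j > i with w_j > 0. -/
open Finset

/-!
At an optimum, moving a small amount of money from a machine `j` with a positive bid to another
machine `i` cannot pay, so the marginal utility of `i` is at most that of `j`. On machine `k` the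
marginal utility is `(w k / y k) / (1 + x k / y k) ^ 2`, so it depends on `x k` only through the
normalized bid `x k / y k`, in which it is strictly decreasing. Hence `w j / y j ≤ w i / y i` forces
`x j / y j ≤ x i / y i`.
-/

theorem right_deriv_nonpos_of_isLocalMaxOn_Ici {φ : ℝ → ℝ} {φ' a : ℝ}
    (hmax : IsLocalMaxOn φ (Set.Ici a) a) (hφ : HasDerivWithinAt φ φ' (Set.Ici a) a) :
    φ' ≤ 0 := by
  have hone : (1 : ℝ) ∈ posTangentConeAt (Set.Ici a) a := by
    simp [one_mem_posTangentConeAt_iff_mem_closure,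
      Set.inter_eq_left.2 Set.Ioi_subset_Ici_self]
  simpa using hmax.hasFDerivWithinAt_nonpos hφ.hasFDerivWithinAt hone

theorem hasDerivAt_mul_div_add (w : ℝ) {y t : ℝ} (hy : y ≠ 0) (hty : t + y ≠ 0) :
    HasDerivAt (fun s ↦ w * (s / (s + y))) (w / y / (1 + t / y) ^ 2) t := by
  have hshare := ((hasDerivAt_id t).div ((hasDerivAt_id t).add_const y) hty).const_mul w
  refine hshare.congr_deriv ?_
  have hratio : 1 + t / y = (t + y) / y := by rw [add_div, div_self hy, add_comm]
  rw [hratio]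
  simp only [id]
  field_simp
  ring

/-- The feasible bids: nonnegative vectors spending exactly the budget `X`. This is the standard
simplex `stdSimplex ℝ ι` with total `X` in place of `1`. -/
def bidSet (ι : Type*) [Fintype ι] (X : ℝ) : Set (ι → ℝ) :=
  {x | (∀ k, 0 ≤ x k) ∧ ∑ k, x k = X}

section Budget

variable {ι : Type*} [Fintype ι]

/-- The utility of the bid vector `x` for a user with weights `w` facing the total opposing bids
`y`. -/
noncomputable def bidUtility (w y x : ι → ℝ) : ℝ :=
  ∑ k, w k * (x k / (x k + y k))

/-- The bid vector obtained from `x` by moving the amount `t` from machine `j` to machine `i`; it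
is `x` itself when `i = j`. -/
def transferBid [DecidableEq ι] (x : ι → ℝ) (i j : ι) (t : ℝ) : ι → ℝ :=
  x + (Pi.single i t - Pi.single j t)

theorem transferBid_mem_bidSet [DecidableEq ι] {X : ℝ} {x : ι → ℝ} (hx : x ∈ bidSet ι X)
    (i : ι) {j : ι} {t : ℝ} (ht : 0 ≤ t) (htj : t ≤ x j) : transferBid x i j t ∈ bidSet ι X := by
  refine ⟨fun k ↦ ?_, by simp [transferBid, sum_add_distrib, hx.2]⟩
  have hxk := hx.1 k
  simp only [transferBid, Pi.add_apply, Pi.sub_apply, Pi.single_apply]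
  split_ifs with hki hkj <;> subst_vars <;> linarith

theorem sum_transferBid [DecidableEq ι] (f : ι → ℝ → ℝ) (x : ι → ℝ) {i j : ι} (hij : i ≠ j)
    (t : ℝ) :
    ∑ k, f k (transferBid x i j t k) =
      ∑ k, f k (x k) + ((f i (x i + t) - f i (x i)) + (f j (x j - t) - f j (x j))) := by
  rw [← sub_eq_iff_eq_add', ← sum_sub_distrib, Fintype.sum_eq_add i j hij]
  · simp [transferBid, hij, hij.symm, sub_eq_add_neg]
  · rintro k ⟨hki, hkj⟩
    simp [transferBid, hki, hkj]

theorem right_deriv_le_left_deriv_of_isMaxOn_bidSet {X : ℝ} {x : ι → ℝ} {f : ι → ℝ → ℝ}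
    (hx : x ∈ bidSet ι X) (hmax : IsMaxOn (fun z : ι → ℝ ↦ ∑ k, f k (z k)) (bidSet ι X) x)
    {i j : ι} (hij : i ≠ j) (hxj : 0 < x j) {fi' fj' : ℝ}
    (hfi : HasDerivWithinAt (f i) fi' (Set.Ici (x i)) (x i))
    (hfj : HasDerivWithinAt (f j) fj' (Set.Iic (x j)) (x j)) : fi' ≤ fj' := by
  classical
  let φ : ℝ → ℝ := fun t ↦ f i (x i + t) + f j (x j - t)
  have hφ_max : IsLocalMaxOn φ (Set.Ici 0) 0 := by
    filter_upwards [Icc_mem_nhdsGE hxj] with t ht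
    have hle : ∑ k, f k (transferBid x i j t k) ≤ ∑ k, f k (x k) :=
      hmax (transferBid_mem_bidSet hx i ht.1 ht.2)
    rw [sum_transferBid f x hij] at hle
    simp only [φ, add_zero, sub_zero]
    linarith
  have hφ_deriv : HasDerivWithinAt φ (fi' * 1 + fj' * -1) (Set.Ici 0) 0 := by
    have hi := HasDerivWithinAt.comp_of_eq (0 : ℝ) hfi
      ((hasDerivWithinAt_id (0 : ℝ) (Set.Ici 0)).const_add (x i))
      (fun t (ht : 0 ≤ t) ↦ by simpa using ht) (by simp)
    have hj := HasDerivWithinAt.comp_of_eq (0 : ℝ) hfj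
      ((hasDerivWithinAt_id (0 : ℝ) (Set.Ici 0)).const_sub (x j))
      (fun t (ht : 0 ≤ t) ↦ by simpa using ht) (by simp)
    exact hi.add hj
  linarith [right_deriv_nonpos_of_isLocalMaxOn_Ici hφ_max hφ_deriv]

theorem marginal_le_marginal_of_isMaxOn_bidUtility {X : ℝ} {w y x : ι → ℝ} (hy : ∀ k, 0 < y k)
    (hx : x ∈ bidSet ι X) (hmax : IsMaxOn (bidUtility w y) (bidSet ι X) x)
    {i j : ι} (hij : i ≠ j) (hxj : 0 < x j) :
    w i / y i / (1 + x i / y i) ^ 2 ≤ w j / y j / (1 + x j / y j) ^ 2 :=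
  have hderiv (k : ι) := hasDerivAt_mul_div_add (w k) (hy k).ne'
    (add_pos_of_nonneg_of_pos (hx.1 k) (hy k)).ne'
  right_deriv_le_left_deriv_of_isMaxOn_bidSet (f := fun k s ↦ w k * (s / (s + y k))) hx hmax hij hxj
    (hderiv i).hasDerivWithinAt (hderiv j).hasDerivWithinAt

theorem bestResponse_monotone_support_general {X : ℝ} {w y x : ι → ℝ} (hy : ∀ k, 0 < y k)
    (hx : x ∈ bidSet ι X) (hmax : IsMaxOn (bidUtility w y) (bidSet ι X) x)
    {i j : ι} (hwj : 0 < w j) (hratio : w j / y j ≤ w i / y i) :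
    x j / y j ≤ x i / y i := by
  by_contra! hlt
  have hij : i ≠ j := by rintro rfl; exact hlt.false
  have hi : 0 ≤ x i / y i := div_nonneg (hx.1 i) (hy i).le
  have hxj : 0 < x j := (div_pos_iff_of_pos_right (hy j)).1 (hi.trans_lt hlt)
  have hrj : 0 < w j / y j := div_pos hwj (hy j)
  refine (marginal_le_marginal_of_isMaxOn_bidUtility hy hx hmax hij hxj).not_gt ?_
  calc w j / y j / (1 + x j / y j) ^ 2
      < w j / y j / (1 + x i / y i) ^ 2 := by gcongr
    _ ≤ w i / y i / (1 + x i / y i) ^ 2 := by gcongr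

end Budget

/-- Monotone support of the best response: if `x*` maximizes
`U(x) = ∑ j, w j · x j / (x j + y j)` over nonnegative bid vectors summing to the
budget `X > 0` (with all opposing bids `y j > 0` and weights `w j ≥ 0`), and `i, j` are
indices with `w j > 0`, `w i / y i ≥ w j / y j` and `x* j > 0`, then `x* i > 0`. -/
theorem bestResponse_monotone_support (n : ℕ) (hn : 1 ≤ n)
    (w y : Fin n → ℝ) (hw : ∀ j, 0 ≤ w j) (hy : ∀ j, 0 < y j)
    (X : ℝ) (hX : 0 < X)
    (xstar : Fin n → ℝ) (hx0 : ∀ j, 0 ≤ xstar j) (hxs : ∑ j, xstar j = X)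
    (hopt : ∀ x' : Fin n → ℝ, (∀ j, 0 ≤ x' j) → ∑ j, x' j = X →
      ∑ j, w j * (x' j / (x' j + y j)) ≤ ∑ j, w j * (xstar j / (xstar j + y j)))
    (i j : Fin n) (hwj : 0 < w j) (hratio : w j / y j ≤ w i / y i)
    (hxj : 0 < xstar j) :
    0 < xstar i := by
  have hle := bestResponse_monotone_support_general (w := w) hy ⟨hx0, hxs⟩
    (fun x' hx' ↦ hopt x' hx'.1 hx'.2) hwj hratio
  exact (div_pos_iff_of_pos_right (hy i)).1 ((div_pos hxj (hy j)).trans_le hle)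
end

section
/- (Finite-parallelism social optimum equals maximum weight matching) Let there be m users and n machines with nonnegative weights w_{ij}, and let user i have parallelism bound k_i ≥ 1. Then the social optimum under the finite parallelism model — the maximum over all allocation schemes (r_{ij}) (with r_{ij} ≥ 0 and Σ_i r_{ij} ≤ 1 for each j) of Σ_i max_{A ⊆ {1,…,n}, |A| ≤ k_i} Σ_{j∈A} w_{ij} r_{ij} — equals the maximum of Σ_{(i,j)∈S} w_{ij} over all sets S ⊆ {1,…,m}×{1,…,n} of user–machine pairs in which each machine j occurs in at most one pair and each user i occurs in at most k_i pairs. -/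
open Finset

/-!
Once every user has fixed a best set of machines, the welfare splits over the machines. The
contribution of a machine is a combination, with nonnegative coefficients of sum at most one, of the
weights of the users who chose it, so giving the machine wholly to a user of largest weight, or to
nobody if these weights are all nonpositive, does not lower it. Conversely, the indicator of a
matching is an allocation scheme.
-/

namespace FiniteParallelism

variable {ι κ R : Type*}

section Definitions

variable [Fintype κ]

/-- The largest sum of at most `k` values of `v`: the utility of a user of parallelism `k` who gets
the value `v j` from machine `j`. The empty selection is allowed, so negative values are skipped. -/
def topSum [AddCommMonoid R] [LinearOrder R] (k : ℕ) (v : κ → R) : R :=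
  ({A : Finset κ | #A ≤ k} : Finset (Finset κ)).sup' ⟨∅, by simp⟩ fun A => ∑ j ∈ A, v j

variable [Fintype ι]

/-- Allocation schemes: `r i j` is the share of machine `j` held by user `i`. -/
def IsAllocation [Semiring R] [Preorder R] (r : ι → κ → R) : Prop :=
  (∀ i j, 0 ≤ r i j) ∧ ∀ j, ∑ i, r i j ≤ 1

/-- The total utility of the scheme `r` when user `i` has parallelism bound `k i`. -/
def welfare [Semiring R] [LinearOrder R] (w : ι → κ → R) (k : ι → ℕ) (r : ι → κ → R) : R :=
  ∑ i, topSum (k i) fun j => w i j * r i j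

/-- Matchings of machines to user-copies, user `i` having `k i` copies. As copies are
interchangeable, only the set of matched user–machine pairs is recorded. -/
def IsCopyMatching [DecidableEq ι] [DecidableEq κ] (k : ι → ℕ) (S : Finset (ι × κ)) : Prop :=
  (∀ j, #{i | (i, j) ∈ S} ≤ 1) ∧ ∀ i, #{j | (i, j) ∈ S} ≤ k i

end Definitions

section TopSum

variable [Fintype κ] [AddCommMonoid R] [LinearOrder R]

theorem sum_le_topSum {k : ℕ} {A : Finset κ} (hA : #A ≤ k) (v : κ → R) :
    ∑ j ∈ A, v j ≤ topSum k v :=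
  le_sup' (fun A => ∑ j ∈ A, v j) (by simpa using hA)

theorem exists_card_le_topSum_eq_sum (k : ℕ) (v : κ → R) :
    ∃ A : Finset κ, #A ≤ k ∧ topSum k v = ∑ j ∈ A, v j := by
  obtain ⟨A, hA, h⟩ := exists_mem_eq_sup' (s := ({A : Finset κ | #A ≤ k} : Finset (Finset κ)))
    ⟨∅, by simp⟩ fun A => ∑ j ∈ A, v j
  exact ⟨A, by simpa using hA, h⟩

end TopSum

section CopyMatching

variable [DecidableEq ι] [DecidableEq κ]

theorem card_filter_fst_eq [Fintype κ] (S : Finset (ι × κ)) (i : ι) :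
    #{p ∈ S | p.1 = i} = #{j | (i, j) ∈ S} := by
  refine card_nbij' Prod.snd (Prod.mk i) ?_ ?_ ?_ ?_ <;> rintro p hp <;> grind

theorem card_filter_snd_eq [Fintype ι] (S : Finset (ι × κ)) (j : κ) :
    #{p ∈ S | p.2 = j} = #{i | (i, j) ∈ S} := by
  refine card_nbij' Prod.fst (·, j) ?_ ?_ ?_ ?_ <;> rintro p hp <;> grind

theorem isCopyMatching_iff_card_filter [Fintype ι] [Fintype κ] {k : ι → ℕ} {S : Finset (ι × κ)} :
    IsCopyMatching k S ↔ (∀ j, #{p ∈ S | p.2 = j} ≤ 1) ∧ ∀ i, #{p ∈ S | p.1 = i} ≤ k i := by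
  simp only [IsCopyMatching, card_filter_fst_eq, card_filter_snd_eq]

theorem exists_isCopyMatching_forall_sum_le [Fintype ι] [Fintype κ] [AddCommMonoid R]
    [LinearOrder R] (w : ι → κ → R) (k : ι → ℕ) :
    ∃ S, IsCopyMatching k S ∧
      ∀ T, IsCopyMatching k T → ∑ p ∈ T, w p.1 p.2 ≤ ∑ p ∈ S, w p.1 p.2 :=
  Set.exists_max_image {S | IsCopyMatching k S} (fun S => ∑ p ∈ S, w p.1 p.2) (Set.toFinite _)
    ⟨∅, by simp [IsCopyMatching]⟩

end CopyMatching

variable [Semiring R] [LinearOrder R] [IsOrderedRing R]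

theorem exists_subset_card_le_one_sum_mul_le (s : Finset ι) (w : ι → R) {r : ι → R}
    (hr : ∀ i ∈ s, 0 ≤ r i) (hsum : ∑ i ∈ s, r i ≤ 1) :
    ∃ t ⊆ s, #t ≤ 1 ∧ ∑ i ∈ s, w i * r i ≤ ∑ i ∈ t, w i := by
  by_cases! hpos : ∃ i ∈ s, 0 < w i
  · obtain ⟨i₁, hi₁, hwi₁⟩ := hpos
    obtain ⟨i₀, hi₀, hmax⟩ := s.exists_max_image w ⟨i₁, hi₁⟩
    refine ⟨{i₀}, by simpa using hi₀, by simp, ?_⟩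
    calc ∑ i ∈ s, w i * r i
      _ ≤ ∑ i ∈ s, w i₀ * r i :=
        sum_le_sum fun i hi => mul_le_mul_of_nonneg_right (hmax i hi) (hr i hi)
      _ = w i₀ * ∑ i ∈ s, r i := (mul_sum ..).symm
      _ ≤ w i₀ := mul_le_of_le_one_right (hwi₁.le.trans (hmax i₁ hi₁)) hsum
      _ = ∑ i ∈ {i₀}, w i := (sum_singleton ..).symm
  · refine ⟨∅, empty_subset s, by simp, ?_⟩
    simpa using sum_nonpos fun i hi => mul_nonpos_of_nonpos_of_nonneg (hpos i hi) (hr i hi)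

variable [Fintype ι] [Fintype κ] [DecidableEq ι] [DecidableEq κ]

theorem IsAllocation.exists_isCopyMatching_welfare_le {r : ι → κ → R} (hr : IsAllocation r)
    (w : ι → κ → R) (k : ι → ℕ) :
    ∃ S, IsCopyMatching k S ∧ welfare w k r ≤ ∑ p ∈ S, w p.1 p.2 := by
  choose A hAcard hA using fun i => exists_card_le_topSum_eq_sum (k i) fun j => w i j * r i j
  have hshare (j : κ) : ∑ i with j ∈ A i, r i j ≤ 1 :=
    (sum_le_univ_sum_of_nonneg fun i => hr.1 i j).trans (hr.2 j)
  choose t htA htcard ht using fun j =>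
    exists_subset_card_le_one_sum_mul_le {i | j ∈ A i} (w · j) (fun i _ => hr.1 i j) (hshare j)
  refine ⟨({p | p.1 ∈ t p.2} : Finset (ι × κ)), ⟨fun j => by simpa using htcard j, fun i => ?_⟩, ?_⟩
  · have hrow : ({j | i ∈ t j} : Finset κ) ⊆ A i := fun j hj => by
      simpa using htA j (by simpa using hj)
    simpa using (card_le_card hrow).trans (hAcard i)
  · calc welfare w k r
      _ = ∑ i, ∑ j ∈ A i, w i j * r i j := sum_congr rfl fun i _ => hA i
      _ = ∑ j, ∑ i with j ∈ A i, w i j * r i j := sum_comm' (by simp)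
      _ ≤ ∑ j, ∑ i ∈ t j, w i j := sum_le_sum fun j _ => ht j
      _ = ∑ p : ι × κ with p.1 ∈ t p.2, w p.1 p.2 :=
        (sum_finset_product_right' _ univ t (by simp)).symm

/-- The scheme giving each machine wholly to the users it is paired with in `S`. -/
def indicatorAllocation (R : Type*) [Semiring R] (S : Finset (ι × κ)) (i : ι) (j : κ) : R :=
  if (i, j) ∈ S then 1 else 0

namespace IsCopyMatching

variable {k : ι → ℕ} {S : Finset (ι × κ)}

theorem isAllocation_indicatorAllocation (hS : IsCopyMatching k S) :
    IsAllocation (indicatorAllocation R S) := by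
  refine ⟨fun i j => ?_, fun j => ?_⟩
  · unfold indicatorAllocation
    split_ifs <;> simp
  · simpa [indicatorAllocation] using Nat.mono_cast (α := R) (hS.1 j)

theorem sum_le_welfare_indicatorAllocation (hS : IsCopyMatching k S) (w : ι → κ → R) :
    ∑ p ∈ S, w p.1 p.2 ≤ welfare w k (indicatorAllocation R S) :=
  calc ∑ p ∈ S, w p.1 p.2
    _ = ∑ i, ∑ j with (i, j) ∈ S, w i j := sum_finset_product' _ _ _ (by simp)
    _ = ∑ i, ∑ j with (i, j) ∈ S, w i j * indicatorAllocation R S i j :=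
      sum_congr rfl fun i _ => sum_congr rfl fun j hj => by
        simp [indicatorAllocation, (mem_filter.1 hj).2]
    _ ≤ welfare w k (indicatorAllocation R S) := sum_le_sum fun i _ => sum_le_topSum (hS.2 i) _

end IsCopyMatching

end FiniteParallelism

open FiniteParallelism

theorem finiteParallelism_socialOptimum_eq_maxMatching_general {ι κ R : Type*}
    [Fintype ι] [Fintype κ] [DecidableEq ι] [DecidableEq κ]
    [Semiring R] [LinearOrder R] [IsOrderedRing R] (w : ι → κ → R) (k : ι → ℕ) :
    ∃ V : R,
      IsGreatest {U | ∃ r : ι → κ → R, IsAllocation r ∧ U = welfare w k r} V ∧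
      IsGreatest {W | ∃ S, IsCopyMatching k S ∧ W = ∑ p ∈ S, w p.1 p.2} V := by
  obtain ⟨S, hS, hmax⟩ := exists_isCopyMatching_forall_sum_le w k
  have hbound (r : ι → κ → R) (hr : IsAllocation r) : welfare w k r ≤ ∑ p ∈ S, w p.1 p.2 := by
    obtain ⟨T, hT, hle⟩ := hr.exists_isCopyMatching_welfare_le w k
    exact hle.trans (hmax T hT)
  have hind : IsAllocation (indicatorAllocation R S) := hS.isAllocation_indicatorAllocation
  refine ⟨∑ p ∈ S, w p.1 p.2, ⟨⟨_, hind, ?_⟩, ?_⟩, ⟨S, hS, rfl⟩, ?_⟩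
  · exact (hS.sum_le_welfare_indicatorAllocation w).antisymm (hbound _ hind)
  · rintro _ ⟨r, hr, rfl⟩
    exact hbound r hr
  · rintro _ ⟨T, hT, rfl⟩
    exact hmax T hT

/-- Finite-parallelism social optimum equals maximum weight matching:
with `m` users, `n` machines, nonnegative weights `w i j` and parallelism bounds
`k i ≥ 1`, the maximum over all allocation schemes `(r i j)` of
`∑ i, max_{A ⊆ machines, |A| ≤ k i} ∑_{j ∈ A} w i j * r i j` is attained, and equals
the attained maximum of `∑_{(i,j) ∈ S} w i j` over all sets `S` of user–machine pairs
in which each machine occurs at most once and each user `i` occurs at most `k i`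
times. -/
theorem finiteParallelism_socialOptimum_eq_maxMatching (m n : ℕ)
    (hm : 1 ≤ m) (hn : 1 ≤ n)
    (w : Fin m → Fin n → ℝ) (hw : ∀ i j, 0 ≤ w i j)
    (k : Fin m → ℕ) (hk : ∀ i, 1 ≤ k i) :
    ∃ V : ℝ,
      IsGreatest
        {U : ℝ | ∃ r : Fin m → Fin n → ℝ,
          (∀ i j, 0 ≤ r i j) ∧ (∀ j, ∑ i, r i j ≤ 1) ∧
          U = ∑ i,
            ((Finset.univ : Finset (Finset (Fin n))).filter
                (fun A => A.card ≤ k i)).sup'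
              ⟨∅, by simp⟩ (fun A => ∑ j ∈ A, w i j * r i j)} V ∧
      IsGreatest
        {W : ℝ | ∃ S : Finset (Fin m × Fin n),
          (∀ j, (S.filter (fun p => p.2 = j)).card ≤ 1) ∧
          (∀ i, (S.filter (fun p => p.1 = i)).card ≤ k i) ∧
          W = ∑ p ∈ S, w p.1 p.2} V := by
  simpa only [isCopyMatching_iff_card_filter, IsAllocation, welfare, topSum, and_assoc] using
    finiteParallelism_socialOptimum_eq_maxMatching_general w k
end

section
/- (Equilibrium utility identity U = 1 − 2λ) Consider a normalized two-player price-anticipating allocation game on n machines: user 1 has weights u_1,…,u_n ≥ 0 with Σ_j u_j = 1, budgets are X₁ = X₂ = 1, user 1 bids x_j > 0 and user 2 bids y_j > 0 on machine j with Σ_j x_j = Σ_j y_j = 1. If there is λ such that u_j·y_j/(x_j + y_j)² = λ for every j (user 1's equilibrium marginal condition), then user 1's utility satisfies U₁ = Σ_j u_j·x_j/(x_j + y_j) = 1 − 2λ. -/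
open Finset

section

variable {K : Type*} [Field K]

-- The marginal utility times the total bid is `u * (y / (x + y))`, the value of the rival's share.
lemma mul_div_add_eq_sub_marginal_mul {x y : K} (hxy : x + y ≠ 0) (u : K) :
    u * (x / (x + y)) = u - u * y / (x + y) ^ 2 * (x + y) := by
  field_simp
  ring

theorem equilibrium_utility_identity_general {ι : Type*} (s : Finset ι) (u x y : ι → K)
    (hxy : ∀ j ∈ s, x j + y j ≠ 0) (l : K)
    (hl : ∀ j ∈ s, u j * y j / (x j + y j) ^ 2 = l) :
    ∑ j ∈ s, u j * (x j / (x j + y j)) =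
      ∑ j ∈ s, u j - l * (∑ j ∈ s, x j + ∑ j ∈ s, y j) :=
  calc
    ∑ j ∈ s, u j * (x j / (x j + y j)) = ∑ j ∈ s, (u j - l * (x j + y j)) :=
      sum_congr rfl fun j hj => by
        rw [mul_div_add_eq_sub_marginal_mul (hxy j hj), hl j hj]
    _ = ∑ j ∈ s, u j - l * (∑ j ∈ s, x j + ∑ j ∈ s, y j) := by
      rw [sum_sub_distrib, ← mul_sum, sum_add_distrib]

end

/-- Equilibrium utility identity `U = 1 - 2λ`: in a normalized two-player
game on `n` machines (user 1's weights `u j ≥ 0` summing to `1`, both users' positive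
bids `x j`, `y j` each summing to the budget `1`), if user 1's marginal utilities are
all equal to `λ`, i.e. `u j · y j / (x j + y j)² = λ` for every `j`, then user 1's
utility satisfies `∑ j, u j · x j / (x j + y j) = 1 - 2λ`. -/
theorem equilibrium_utility_identity (n : ℕ)
    (u x y : Fin n → ℝ) (hu : ∀ j, 0 ≤ u j) (hus : ∑ j, u j = 1)
    (hx : ∀ j, 0 < x j) (hy : ∀ j, 0 < y j)
    (hxs : ∑ j, x j = 1) (hys : ∑ j, y j = 1)
    (l : ℝ) (hl : ∀ j, u j * y j / (x j + y j) ^ 2 = l) :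
    ∑ j, u j * (x j / (x j + y j)) = 1 - 2 * l := by
  rw [equilibrium_utility_identity_general univ u x y
    (fun j _ => (add_pos (hx j) (hy j)).ne') l (fun j _ => hl j), hus, hxs, hys]
  ring
end
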